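/- arXiv:math/0611136 — 9 statements merged into one kernel-verified Lean document; each statement's English description precedes it below -/
import Mathlib

section
/- Let p be a prime and let L be a field complete with respect to a nonarchimedean (ultrametric) absolute value ‖·‖ extending the p-adic absolute value of ℚ_p (normalized so that ‖p‖ = p^{-1}). Let r be a real number with p^{-1/(p-1)} < r < 1. Then for every α ∈ L with r ≤ ‖α‖ < 1 one has ‖(1+α)^p − 1‖ = ‖α‖^p; in particular r^p ≤ ‖(1+α)^p − 1‖ < 1, so the map α ↦ (1+α)^p − 1 sends the annulus {r ≤ ‖·‖ < 1} into the annulus {r^p ≤ ‖·‖ < 1}. -/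
/-!
The middle binomial coefficients of `(1 + α) ^ p` are divisible by `p`, so
`(1 + α) ^ p - 1 = α ^ p + p * α * s`, where every term of `s` is an integer times a power
of `α`. Hence `‖p * α * s‖ ≤ p⁻¹ * ‖α‖` by the ultrametric inequality, and `‖α‖ > p ^ (-1 / (p - 1))`
says exactly that `p⁻¹ * ‖α‖ < ‖α‖ ^ p`. So `α ^ p` is the strictly dominant term.
-/

/-- Let `p` be a prime and `L` a field complete with respect to a
nonarchimedean absolute value extending the `p`-adic absolute value of `ℚ_p`
(so `‖p‖ = p⁻¹`).  If `p^(-1/(p-1)) < r < 1`, then for every `α ∈ L` with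
`r ≤ ‖α‖ < 1` one has `‖(1+α)^p - 1‖ = ‖α‖^p`; in particular
`r^p ≤ ‖(1+α)^p - 1‖ < 1`. -/
theorem stmt0 (p : ℕ) [Fact p.Prime] (L : Type*) [NormedField L] [CompleteSpace L]
    [IsUltrametricDist L] [Algebra ℚ_[p] L]
    (hext : ∀ q : ℚ_[p], ‖algebraMap ℚ_[p] L q‖ = ‖q‖)
    (r : ℝ) (hr1 : (p : ℝ) ^ (-(1 : ℝ) / ((p : ℝ) - 1)) < r) (hr2 : r < 1)
    (α : L) (hα1 : r ≤ ‖α‖) (hα2 : ‖α‖ < 1) :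
    ‖(1 + α) ^ p - 1‖ = ‖α‖ ^ p ∧
      r ^ p ≤ ‖(1 + α) ^ p - 1‖ ∧ ‖(1 + α) ^ p - 1‖ < 1 := by
  have hp : p.Prime := Fact.out
  have hp1 : (1 : ℝ) < p := by exact_mod_cast hp.one_lt
  have hp0 : (0 : ℝ) < p := by linarith
  have hr0 : 0 < r := (Real.rpow_pos_of_pos hp0 _).trans hr1
  have hα0 : 0 < ‖α‖ := hr0.trans_le hα1
  have hnp : ‖(p : L)‖ = (p : ℝ)⁻¹ := by
    rw [← map_natCast (algebraMap ℚ_[p] L) p, hext, Padic.norm_p]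
  have hlow : (p : ℝ)⁻¹ < ‖α‖ ^ (p - 1) := by
    have hcast : ((p - 1 : ℕ) : ℝ) = (p : ℝ) - 1 := by
      rw [Nat.cast_sub hp.one_le, Nat.cast_one]
    have h := pow_lt_pow_left₀ (hr1.trans_le hα1) (Real.rpow_nonneg hp0.le _)
      (Nat.sub_ne_zero_of_lt hp.one_lt)
    rwa [← Real.rpow_natCast, ← Real.rpow_mul hp0.le, hcast,
      div_mul_cancel₀ _ (sub_pos.2 hp1).ne', Real.rpow_neg_one] at h
  set s : L := ∑ k ∈ Finset.Ioo 0 p, 1 ^ (k - 1) * α ^ (p - k - 1) * ((p.choose k / p : ℕ) : L)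
    with hs
  have hsum : (1 + α) ^ p - 1 = α ^ p + p * α * s := by
    rw [add_pow_prime_eq hp, one_pow, ← hs]
    ring
  have hsle : ‖s‖ ≤ 1 := by
    refine IsUltrametricDist.norm_sum_le_of_forall_le_of_nonneg zero_le_one fun k _ => ?_
    rw [one_pow, one_mul, norm_mul, norm_pow]
    exact mul_le_one₀ (pow_le_one₀ hα0.le hα2.le) (norm_nonneg _)
      (IsUltrametricDist.norm_natCast_le_one L _)
  have hlt : ‖(p : L) * α * s‖ < ‖α ^ p‖ := by
    rw [norm_mul, norm_mul, hnp, norm_pow]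
    calc (p : ℝ)⁻¹ * ‖α‖ * ‖s‖ ≤ (p : ℝ)⁻¹ * ‖α‖ :=
          mul_le_of_le_one_right (by positivity) hsle
      _ < ‖α‖ ^ (p - 1) * ‖α‖ := by gcongr
      _ = ‖α‖ ^ p := pow_sub_one_mul hp.ne_zero _
  have key : ‖(1 + α) ^ p - 1‖ = ‖α‖ ^ p := by
    rw [hsum, IsUltrametricDist.norm_add_eq_max_of_norm_ne_norm hlt.ne', max_eq_left hlt.le,
      norm_pow]
  rw [key]
  exact ⟨rfl, pow_le_pow_left₀ hr0.le hα1 p, pow_lt_one₀ hα0.le hα2 hp.ne_zero⟩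
end

section
/- Let p be a prime, m a positive integer, and c : ℤ → ℤ_p a two-sided sequence of p-adic integers. Then the following are equivalent: (i) c is m-overconvergent, i.e. v_p(c_k) + k/m ≥ 0 for all k < 0 and v_p(c_k) + k/m → +∞ as k → −∞; (ii) for every finite field extension L of ℚ_p, equipped with its unique nonarchimedean absolute value ‖·‖ extending the p-adic absolute value (‖p‖ = p^{-1}), and every x ∈ L with p^{-1/m} ≤ ‖x‖ < 1, the family (c_k·x^k)_{k∈ℤ} is summable in L and ‖∑_{k∈ℤ} c_k x^k‖ ≤ 1. -/
/-!
If `c` is overconvergent, each term `c k * x ^ k` has norm at most `1` and the terms tend to `0`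
along the cofinite filter, so in a complete nonarchimedean field they sum to an element of norm at
most `1`.

Conversely, everything is tested on the circle `‖x‖ = p ^ (-1/m)` in an algebraic closure of
`ℚ_[p]`: each `x` there lies in the finite extension `ℚ_[p]⟮x⟯`, so the hypothesis applies to it
(`exists_hasSum_padicAlgCl`). Fix `π` with `π ^ m = p`. Convergence at `π` gives the
decay `‖c k‖ * p ^ (-k/m) → 0`. For the bound on `‖c k‖`, let `N` be prime to `p` and `ζ` a
primitive `N`-th root of unity. Averaging the sums at the points `π * ζ ^ j` against `ζ ^ (-j k)`
isolates the terms with index congruent to `k` mod `N`; since `N` is a `p`-adic unit, the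
sum of these terms still has norm at most `1`. By the decay only finitely many terms have norm
above `1`, so for `N` large all terms in this progression other than the `k`-th are bounded by `1`,
hence so is the `k`-th (`norm_coeff_le_one`). This replaces the usual passage to a large residue
field.
-/


open Filter

/-- A two-sided sequence `c : ℤ → ℤ_[p]` is *`m`-overconvergent* if
`v_p(c k) + k/m ≥ 0` for all `k < 0` and `v_p(c k) + k/m → +∞` as `k → -∞`
(with `v_p 0 = +∞`).  Expressed via the norm `‖c k‖ = p^(-v_p(c k))`, the first
condition reads `‖c k‖ ≤ p^(k/m)` and the second reads
`‖c k‖ * p^(-k/m) → 0` as `k → -∞`. -/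
def IsOverconvergent (p : ℕ) [Fact p.Prime] (m : ℕ) (c : ℤ → ℤ_[p]) : Prop :=
  (∀ k : ℤ, k < 0 → ‖c k‖ ≤ (p : ℝ) ^ ((k : ℝ) / (m : ℝ))) ∧
    Tendsto (fun k : ℤ => ‖c k‖ * (p : ℝ) ^ (-(k : ℝ) / (m : ℝ))) atBot (nhds 0)

open Classical in
/-- Character sum of an `N`-th root of unity. -/
lemma sum_pow_root {F : Type*} [Field F] {N : ℕ} {η : F} (h : η ^ N = 1) :
    ∑ j ∈ Finset.range N, η ^ j = if η = 1 then (N : F) else 0 := by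
  split_ifs with h1
  · simp [h1]
  · have h2 := mul_geom_sum η N
    rw [h, sub_self] at h2
    exact (mul_eq_zero.1 h2).resolve_left (sub_ne_zero.2 h1)

lemma norm_root_eq_one {F : Type*} [NormedField F] {N : ℕ} {ζ : F} (h : ζ ^ N = 1)
    (hN : N ≠ 0) : ‖ζ‖ = 1 := by
  rw [← pow_eq_one_iff_of_nonneg (norm_nonneg ζ) hN, ← norm_pow, h, norm_one]

lemma norm_le_one_of_hasSum {F ι : Type*} [NormedField F] [IsUltrametricDist F]
    {f : ι → F} {s : F} (hf : HasSum f s) (h : ∀ i, ‖f i‖ ≤ 1) : ‖s‖ ≤ 1 := by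
  rw [← hf.tsum_eq]
  exact IsUltrametricDist.norm_tsum_le_of_forall_le_of_nonneg zero_le_one h

/-- Extraction of a coefficient bound by averaging over `N`-th roots of unity: if the series
`∑ a l * y ^ l` has sum of norm at most `1` at every `y = ζ ^ j`, and `a k` is the only
possibly large coefficient in its class mod `N`, then `a k` is not large either. -/
lemma norm_coeff_le_one {F : Type*} [NormedField F] [IsUltrametricDist F]
    (a : ℤ → F) {N : ℕ} {ζ : F} (hN0 : N ≠ 0) (hζ : IsPrimitiveRoot ζ N) (hN : ‖(N : F)‖ = 1)
    (s : ℕ → F) (hs : ∀ j, HasSum (fun l : ℤ => a l * (ζ ^ j) ^ l) (s j))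
    (hs1 : ∀ j, ‖s j‖ ≤ 1) (k : ℤ) (hk : ∀ l, l ≠ k → (N : ℤ) ∣ l - k → ‖a l‖ ≤ 1) :
    ‖a k‖ ≤ 1 := by
  have hζ0 : ζ ≠ 0 := hζ.ne_zero hN0
  have hζn : ‖ζ‖ = 1 := norm_root_eq_one hζ.pow_eq_one hN0
  have hsum : HasSum
      (fun l : ℤ => ∑ j ∈ Finset.range N, (ζ ^ j) ^ (-k) * (a l * (ζ ^ j) ^ l))
      (∑ j ∈ Finset.range N, (ζ ^ j) ^ (-k) * s j) :=
    hasSum_sum fun j _ => (hs j).mul_left _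
  have hG : ∀ l : ℤ, ∑ j ∈ Finset.range N, (ζ ^ j) ^ (-k) * (a l * (ζ ^ j) ^ l) =
      if (N : ℤ) ∣ l - k then a l * N else 0 := by
    intro l
    have h1 : ∀ j ∈ Finset.range N, (ζ ^ j) ^ (-k) * (a l * (ζ ^ j) ^ l) =
        a l * (ζ ^ (l - k)) ^ j := by
      intro j _
      have : (ζ ^ (l - k)) ^ j = (ζ ^ j) ^ l * (ζ ^ j) ^ (-k) := by
        rw [← zpow_add₀ (pow_ne_zero _ hζ0), ← zpow_natCast, ← zpow_natCast, ← zpow_mul,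
          ← zpow_mul, mul_comm, sub_eq_add_neg]
      rw [this]
      ring
    have h2 : (ζ ^ (l - k)) ^ N = 1 := by
      rw [← zpow_natCast, ← zpow_mul, mul_comm, zpow_mul, zpow_natCast, hζ.pow_eq_one, one_zpow]
    rw [Finset.sum_congr rfl h1, ← Finset.mul_sum, sum_pow_root h2]
    simp only [hζ.zpow_eq_one_iff_dvd]
    split_ifs <;> simp
  simp only [hG] at hsum
  have hS : ‖∑ j ∈ Finset.range N, (ζ ^ j) ^ (-k) * s j‖ ≤ 1 := by
    refine IsUltrametricDist.norm_sum_le_of_forall_le_of_nonneg zero_le_one fun j _ => ?_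
    simpa [hζn] using hs1 j
  have hupd := hsum.update k 0
  have hrest := norm_le_one_of_hasSum hupd (by
    intro l
    by_cases hl : l = k
    · simp [hl]
    · rw [Function.update_of_ne hl]
      split_ifs with hd
      · simpa [hN] using hk l hl hd
      · simp)
  have hak : ‖a k * N‖ ≤ 1 := by
    have : a k * N = (∑ j ∈ Finset.range N, (ζ ^ j) ^ (-k) * s j) -
        (0 - (if (N : ℤ) ∣ k - k then a k * N else 0) +
          ∑ j ∈ Finset.range N, (ζ ^ j) ^ (-k) * s j) := by
      simp
    rw [this, sub_eq_add_neg]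
    refine (IsUltrametricDist.norm_add_le_max _ _).trans (max_le hS ?_)
    rwa [norm_neg]
  simpa [hN] using hak

/-- The analytic condition over all finite extensions of `ℚ_[p]` transfers to every point of the
annulus in the algebraic closure. -/
lemma exists_hasSum_padicAlgCl (p : ℕ) [Fact p.Prime] (m : ℕ) (c : ℤ → ℤ_[p])
    (H : ∀ (L : Type) [NormedField L] [CompleteSpace L] [IsUltrametricDist L]
        [Algebra ℚ_[p] L] [FiniteDimensional ℚ_[p] L],
        (∀ q : ℚ_[p], ‖algebraMap ℚ_[p] L q‖ = ‖q‖) →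
        ∀ x : L, (p : ℝ) ^ (-(1 : ℝ) / (m : ℝ)) ≤ ‖x‖ → ‖x‖ < 1 →
          Summable (fun k : ℤ => algebraMap ℚ_[p] L (c k : ℚ_[p]) * x ^ k) ∧
            ‖∑' k : ℤ, algebraMap ℚ_[p] L (c k : ℚ_[p]) * x ^ k‖ ≤ 1)
    (x : PadicAlgCl p) (hx : (p : ℝ) ^ (-(1 : ℝ) / (m : ℝ)) ≤ ‖x‖) (hx1 : ‖x‖ < 1) :
    ∃ s : PadicAlgCl p, ‖s‖ ≤ 1 ∧
      HasSum (fun k : ℤ => algebraMap ℚ_[p] (PadicAlgCl p) (c k : ℚ_[p]) * x ^ k) s := by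
  let L := IntermediateField.adjoin ℚ_[p] {x}
  have : FiniteDimensional ℚ_[p] L :=
    IntermediateField.adjoin.finiteDimensional (Algebra.IsIntegral.isIntegral x)
  have : CompleteSpace L := FiniteDimensional.complete ℚ_[p] L
  have : IsUltrametricDist L := IsUltrametricDist.subtype _
  let y : L := ⟨x, IntermediateField.mem_adjoin_simple_self _ x⟩
  obtain ⟨h1, h2⟩ := H L (fun q => PadicAlgCl.norm_extends p q) y hx hx1
  refine ⟨_, h2, ?_⟩
  have h3 := h1.hasSum.map L.val (continuous_subtype_val)
  have h4 : (fun k : ℤ => algebraMap ℚ_[p] (PadicAlgCl p) (c k : ℚ_[p]) * x ^ k) =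
      L.val ∘ fun k : ℤ => algebraMap ℚ_[p] L (c k : ℚ_[p]) * y ^ k := by
    funext k
    simp only [Function.comp_apply, map_mul, map_zpow₀, AlgHom.commutes]
    rfl
  rw [h4]
  exact h3

/-- A sequence `c : ℤ → ℤ_[p]` is `m`-overconvergent if and only
if for every finite extension `L` of `ℚ_p` (with its unique nonarchimedean
absolute value extending the `p`-adic one) and every `x ∈ L` with
`p^(-1/m) ≤ ‖x‖ < 1`, the family `(c k * x^k)_{k ∈ ℤ}` is summable in `L` with
sum of norm at most `1`. -/
theorem stmt2 (p : ℕ) [Fact p.Prime] (m : ℕ) (hm : 0 < m) (c : ℤ → ℤ_[p]) :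
    IsOverconvergent p m c ↔
      ∀ (L : Type) [NormedField L] [CompleteSpace L] [IsUltrametricDist L]
        [Algebra ℚ_[p] L] [FiniteDimensional ℚ_[p] L],
        (∀ q : ℚ_[p], ‖algebraMap ℚ_[p] L q‖ = ‖q‖) →
        ∀ x : L, (p : ℝ) ^ (-(1 : ℝ) / (m : ℝ)) ≤ ‖x‖ → ‖x‖ < 1 →
          Summable (fun k : ℤ => algebraMap ℚ_[p] L (c k : ℚ_[p]) * x ^ k) ∧
            ‖∑' k : ℤ, algebraMap ℚ_[p] L (c k : ℚ_[p]) * x ^ k‖ ≤ 1 := by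
  have hp := (Fact.out : p.Prime)
  have hp0 : (0 : ℝ) < p := by exact_mod_cast hp.pos
  have hp1 : (1 : ℝ) < p := by exact_mod_cast hp.one_lt
  have hm' : (0 : ℝ) < m := by exact_mod_cast hm
  have hr0 : 0 < (p : ℝ) ^ (-(1 : ℝ) / (m : ℝ)) := Real.rpow_pos_of_pos hp0 _
  have hrk : ∀ k : ℤ, ((p : ℝ) ^ (-(1 : ℝ) / (m : ℝ))) ^ k = (p : ℝ) ^ (-(k : ℝ) / (m : ℝ)) := by
    intro k
    rw [← Real.rpow_intCast, ← Real.rpow_mul hp0.le]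
    congr 1
    ring
  constructor
  · rintro ⟨hb, ht⟩ L _ _ _ _ _ hL x hx hx1
    have hn : ∀ k : ℤ, ‖algebraMap ℚ_[p] L (c k : ℚ_[p]) * x ^ k‖ = ‖c k‖ * ‖x‖ ^ k := by
      intro k
      rw [norm_mul, hL, norm_zpow]
      rfl
    have hx0 : 0 < ‖x‖ := hr0.trans_le hx
    have hneg : ∀ k : ℤ, k < 0 →
        ‖c k‖ * ‖x‖ ^ k ≤ ‖c k‖ * (p : ℝ) ^ (-(k : ℝ) / (m : ℝ)) := by
      intro k hk
      refine mul_le_mul_of_nonneg_left ?_ (norm_nonneg _)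
      rw [← hrk]
      obtain ⟨n, rfl⟩ : ∃ n : ℕ, k = -(n : ℤ) := ⟨k.natAbs, by omega⟩
      simp only [zpow_neg, zpow_natCast]
      exact inv_anti₀ (pow_pos hr0 _) (pow_le_pow_left₀ hr0.le hx _)
    have hle : ∀ k : ℤ, ‖algebraMap ℚ_[p] L (c k : ℚ_[p]) * x ^ k‖ ≤ 1 := by
      intro k
      rw [hn]
      rcases lt_or_ge k 0 with hk | hk
      · refine (hneg k hk).trans ?_
        refine (mul_le_mul_of_nonneg_right (hb k hk) (Real.rpow_nonneg hp0.le _)).trans ?_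
        rw [← Real.rpow_add hp0, neg_div, add_neg_cancel, Real.rpow_zero]
      · lift k to ℕ using hk
        rw [zpow_natCast]
        exact mul_le_one₀ (PadicInt.norm_le_one _) (by positivity)
          (pow_le_one₀ (norm_nonneg _) hx1.le)
    refine ⟨?_, IsUltrametricDist.norm_tsum_le_of_forall_le_of_nonneg zero_le_one hle⟩
    apply NonarchimedeanAddGroup.summable_of_tendsto_cofinite_zero
    rw [tendsto_zero_iff_norm_tendsto_zero]
    simp only [hn]
    rw [Int.cofinite_eq, tendsto_sup]
    constructor
    · refine squeeze_zero' (Eventually.of_forall fun k => by positivity) ?_ ht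
      filter_upwards [eventually_lt_atBot 0] with k hk using hneg k hk
    · have hpow : Tendsto (fun k : ℤ => ‖x‖ ^ k.toNat) atTop (nhds 0) :=
        (tendsto_pow_atTop_nhds_zero_of_lt_one (norm_nonneg x) hx1).comp
          (tendsto_atTop.2 fun n => by
            filter_upwards [eventually_ge_atTop (n : ℤ)] with k hk
            omega)
      refine squeeze_zero' (Eventually.of_forall fun k => by positivity) ?_ hpow
      filter_upwards [eventually_ge_atTop 0] with k hk
      lift k to ℕ using hk
      rw [zpow_natCast, Int.toNat_natCast]
      exact mul_le_of_le_one_left (by positivity) (PadicInt.norm_le_one _)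
  · intro H
    have key := exists_hasSum_padicAlgCl p m c H
    obtain ⟨π, hπ⟩ := IsAlgClosed.exists_pow_nat_eq (p : PadicAlgCl p) hm
    have hpn : ‖(p : PadicAlgCl p)‖ = (p : ℝ)⁻¹ := by
      have := PadicAlgCl.norm_extends p (p : ℚ_[p])
      rwa [map_natCast, Padic.norm_p] at this
    have hπn : ‖π‖ = (p : ℝ) ^ (-(1 : ℝ) / (m : ℝ)) := by
      rw [← pow_left_inj₀ (norm_nonneg _) hr0.le hm.ne', ← norm_pow, hπ, hpn,
        ← Real.rpow_natCast, ← Real.rpow_mul hp0.le, div_mul_cancel₀ _ hm'.ne',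
        Real.rpow_neg_one]
    have hr1 : (p : ℝ) ^ (-(1 : ℝ) / (m : ℝ)) < 1 :=
      Real.rpow_lt_one_of_one_lt_of_neg hp1 (div_neg_of_neg_of_pos (by norm_num) hm')
    set a : ℤ → PadicAlgCl p := fun k => algebraMap ℚ_[p] (PadicAlgCl p) (c k : ℚ_[p]) * π ^ k
      with ha
    have han : ∀ k, ‖a k‖ = ‖c k‖ * (p : ℝ) ^ (-(k : ℝ) / (m : ℝ)) := by
      intro k
      rw [ha, norm_mul, norm_zpow, hπn, hrk]
      congr 1
      exact PadicAlgCl.norm_extends p (c k : ℚ_[p])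
    obtain ⟨s₀, -, hs₀⟩ := key π hπn.ge (hπn ▸ hr1)
    have hlim : Tendsto (fun k => ‖a k‖) cofinite (nhds 0) :=
      tendsto_zero_iff_norm_tendsto_zero.1 hs₀.summable.tendsto_cofinite_zero
    refine ⟨?_, ?_⟩
    · have hfin : {k | ¬ ‖a k‖ ≤ 1}.Finite :=
        (hlim.eventually (eventually_le_nhds (zero_lt_one (α := ℝ))) : _)
      obtain ⟨B, hB⟩ : ∃ B : ℕ, ∀ k, ¬ ‖a k‖ ≤ 1 → k.natAbs ≤ B := by
        obtain ⟨B, hB⟩ := (hfin.image Int.natAbs).bddAbove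
        exact ⟨B, fun k hk => hB ⟨k, hk, rfl⟩⟩
      have hle : ∀ k, ‖a k‖ ≤ 1 := by
        intro k
        by_contra hk
        -- prime to `p`, and larger than the distance of any two indices in `[-B, B]`
        let N : ℕ := p * (2 * B) + 1
        have hBN : 2 * B < N := Nat.lt_succ_of_le (Nat.le_mul_of_pos_left _ hp.pos)
        have hN0 : N ≠ 0 := Nat.succ_ne_zero _
        have : NeZero N := ⟨hN0⟩
        have : NeZero (N : PadicAlgCl p) := ⟨Nat.cast_ne_zero.2 hN0⟩
        obtain ⟨ζ, hζ⟩ := HasEnoughRootsOfUnity.exists_primitiveRoot (PadicAlgCl p) N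
        have hζn : ‖ζ‖ = 1 := norm_root_eq_one hζ.pow_eq_one hN0
        have hN : ‖(N : PadicAlgCl p)‖ = 1 := by
          have h := PadicAlgCl.norm_extends p (N : ℚ_[p])
          rw [map_natCast] at h
          rw [h, Padic.norm_natCast_eq_one_iff]
          simp [N]
        have hj : ∀ j : ℕ, ‖π * ζ ^ j‖ = (p : ℝ) ^ (-(1 : ℝ) / (m : ℝ)) := by
          intro j
          simp [hζn, hπn]
        choose s hs1 hs using fun j : ℕ => key (π * ζ ^ j) (hj j).ge ((hj j).trans_lt hr1)
        refine hk (norm_coeff_le_one a hN0 hζ hN s ?_ hs1 k ?_)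
        · intro j
          convert hs j using 2 with l
          rw [mul_zpow, ha, mul_assoc]
        · intro l hlk hd
          by_contra hl
          have h1 := hB k hk
          have h2 := hB l hl
          have h3 := Int.le_of_dvd (a := (N : ℤ)) (b := |l - k|)
            (abs_pos.2 (sub_ne_zero.2 hlk)) ((dvd_abs _ _).2 hd)
          rw [Int.abs_eq_natAbs] at h3
          omega
      intro k _
      have h := hle k
      rw [han, neg_div, Real.rpow_neg hp0.le, ← div_eq_mul_inv,
        div_le_one (Real.rpow_pos_of_pos hp0 _)] at h
      exact h
    · simp only [han] at hlim
      exact hlim.mono_left (Int.cofinite_eq ▸ le_sup_left)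
end

section
/- Let p be a prime, e ≥ 1 and n ≥ 2 integers, and set m = (p−1)·e·p^{n−1}. If c : ℤ → ℤ_p is an m-overconvergent sequence, then the derived sequence c' : ℤ → ℤ_p defined by c'_k = (k+1)·c_{k+1} is again m-overconvergent; that is, v_p((k+1)·c_{k+1}) + k/m ≥ 0 for every k < 0, and v_p((k+1)·c_{k+1}) + k/m → +∞ as k → −∞. -/
/-!
Write `j = k + 1` and `m = (p - 1) * e * p ^ (n - 1)`, so that `m > 0` and, since `n ≥ 2`, `p ∣ m`.
The shift of index costs `1/m` in the growth condition. In the limit this is only a constant factor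
`p ^ (1/m)`. In the inequality it has to be absorbed: `v = v_p(c j)` is an integer with `v * m ≥ -j`,
so either `v * m ≥ -j + 1`, which suffices, or `j = -v * m` is divisible by `p`, and then the
factor `j` contributes an extra valuation of at least `1 ≥ 1/m`
(`norm_intCast_mul_le_of_norm_le`).
-/

open Filter

/-- The factor `j` in the formal derivative compensates for the index shift from `j` to `j - 1`,
as soon as `p ∣ m`. -/
lemma norm_intCast_mul_le_of_norm_le (p : ℕ) [hp : Fact p.Prime] (m : ℕ) (hm : 0 < m)
    (hpm : p ∣ m) (j : ℤ) (x : ℤ_[p]) (hx : ‖x‖ ≤ (p : ℝ) ^ ((j : ℝ) / (m : ℝ))) :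
    ‖(j : ℤ_[p]) * x‖ ≤ (p : ℝ) ^ (((j : ℝ) - 1) / (m : ℝ)) := by
  have hp1 : (1 : ℝ) < p := by exact_mod_cast hp.out.one_lt
  have hp0 : (0 : ℝ) < p := by linarith
  have hm1 : (1 : ℝ) ≤ m := by exact_mod_cast hm
  have hm0 : (0 : ℝ) < m := by linarith
  rcases eq_or_ne x 0 with rfl | hx0
  · simp only [mul_zero, norm_zero]
    positivity
  have hv : ‖x‖ = (p : ℝ) ^ (-(x.valuation : ℝ)) := by
    rw [PadicInt.norm_eq_zpow_neg_valuation hx0, ← Real.rpow_intCast]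
    push_cast
    rfl
  rw [hv, Real.rpow_le_rpow_left_iff hp1, le_div_iff₀ hm0] at hx
  have hxZ : -(x.valuation : ℤ) * m ≤ j := by exact_mod_cast hx
  rw [norm_mul, hv]
  rcases hxZ.lt_or_eq with hlt | heq
  · have h1 : -(x.valuation : ℝ) * m ≤ j - 1 := by
      have h2 : -(x.valuation : ℤ) * m ≤ j - 1 := by omega
      exact_mod_cast h2
    calc ‖(j : ℤ_[p])‖ * (p : ℝ) ^ (-(x.valuation : ℝ))
        ≤ 1 * (p : ℝ) ^ (-(x.valuation : ℝ)) := by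
          gcongr
          exact PadicInt.norm_le_one _
      _ ≤ _ := by
          rw [one_mul, Real.rpow_le_rpow_left_iff hp1, le_div_iff₀ hm0]
          exact h1
  · have hpj : ((p ^ 1 : ℕ) : ℤ) ∣ j := by
      rw [← heq, pow_one]
      exact Dvd.dvd.mul_left (by exact_mod_cast hpm) _
    have hj : ‖(j : ℤ_[p])‖ ≤ (p : ℝ) ^ (-1 : ℝ) := by
      have h := (PadicInt.norm_int_le_pow_iff_dvd (p := p) (k := j) (n := 1)).2 (by exact_mod_cast hpj)
      rw [← Real.rpow_intCast] at h
      simpa using h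
    have heqR : -(x.valuation : ℝ) * m = j := by exact_mod_cast heq
    calc ‖(j : ℤ_[p])‖ * (p : ℝ) ^ (-(x.valuation : ℝ))
        ≤ (p : ℝ) ^ (-1 : ℝ) * (p : ℝ) ^ (-(x.valuation : ℝ)) := by gcongr
      _ ≤ _ := by
          rw [← Real.rpow_add hp0, Real.rpow_le_rpow_left_iff hp1, le_div_iff₀ hm0]
          linarith

/-- Let `m = (p-1) * e * p^(n-1)` with `e ≥ 1` and `n ≥ 2`.
If `c : ℤ → ℤ_[p]` is `m`-overconvergent, then so is the formally derived
sequence `c' k = (k+1) * c (k+1)`. -/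
theorem stmt3 (p : ℕ) [Fact p.Prime] (e n : ℕ) (he : 1 ≤ e) (hn : 2 ≤ n)
    (c : ℤ → ℤ_[p]) (hc : IsOverconvergent p ((p - 1) * e * p ^ (n - 1)) c) :
    IsOverconvergent p ((p - 1) * e * p ^ (n - 1))
      (fun k : ℤ => ((k + 1 : ℤ) : ℤ_[p]) * c (k + 1)) := by
  obtain ⟨hbound, hlim⟩ := hc
  have hp : p.Prime := Fact.out
  have hp0 : (0 : ℝ) < p := by exact_mod_cast hp.pos
  have hm : 0 < (p - 1) * e * p ^ (n - 1) :=
    Nat.mul_pos (Nat.mul_pos (Nat.sub_pos_of_lt hp.one_lt) he) (pow_pos hp.pos _)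
  have hpm : p ∣ (p - 1) * e * p ^ (n - 1) :=
    Dvd.dvd.mul_left (dvd_pow_self p (by omega)) _
  generalize (p - 1) * e * p ^ (n - 1) = m at *
  refine ⟨fun k hk => ?_, ?_⟩
  · rcases eq_or_ne (k + 1) 0 with h0 | h0
    · simp only [h0, Int.cast_zero, zero_mul, norm_zero]
      positivity
    · have h := norm_intCast_mul_le_of_norm_le p m hm hpm (k + 1) (c (k + 1))
        (hbound (k + 1) (by omega))
      simpa using h
  · have hshift : Tendsto (fun k : ℤ => k + 1) atBot atBot :=
      tendsto_atBot_add_const_right _ _ tendsto_id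
    have hlim' := (hlim.comp hshift).mul_const ((p : ℝ) ^ (1 / (m : ℝ)))
    rw [zero_mul] at hlim'
    refine squeeze_zero (fun k => by positivity) (fun k => ?_) hlim'
    have hsplit : (p : ℝ) ^ (-(k : ℝ) / (m : ℝ)) =
        (p : ℝ) ^ (-((k + 1 : ℤ) : ℝ) / (m : ℝ)) * (p : ℝ) ^ (1 / (m : ℝ)) := by
      rw [← Real.rpow_add hp0]
      congr 1
      push_cast
      ring
    simp only [Function.comp_apply]
    rw [hsplit, ← mul_assoc, norm_mul]
    gcongr
    exact mul_le_of_le_one_left (norm_nonneg _) (PadicInt.norm_le_one _)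
end

section
/- Let p be a prime, e ≥ 1 and N ≥ 1 integers, and for j ≥ 1 set m_j = (p−1)·e·p^{j−1}. Let c : ℤ → ℤ_p be an m_N-overconvergent sequence which is not identically zero. Then the minimum k of v_p(c_i) over all i ∈ ℤ exists; let L be the least integer with v_p(c_L) = k. Then there exists an integer M ≥ 1 such that the shifted, normalized sequence d : ℤ → ℤ_p defined by d_i = p^{−k}·c_{L+i} (which is well defined since v_p(c_{L+i}) ≥ k for all i) is m_{N+M}-overconvergent and satisfies v_p(d_0) = 0. -/
/-!
The weight condition at `-∞` forces `‖c i‖` to be eventually smaller than the maximal norm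
`p ^ (-k)`, so the set of indices attaining the maximum is bounded below and has a least element
`L`. Write `m = m_N` and `m' = m * P` with `P = p ^ M`. For `i < 0` the normalized coefficient
`d i` has norm `< 1`, hence at most `p⁻¹`, because the norm is discretely valued; this gives the
required bound as long as `-i ≤ m'`. For `-i > m'` the bound inherited from `c` is
`p ^ (k + (L + i) / m)`, and this is at most `p ^ (i / m')` as soon as `P ≥ k + |L| + 1`: passing
from `m` to `m'` gains a slope that, for such large `-i`, absorbs the constant `k + L / m`
(`exponent_le`). The limit condition for `d` follows from that for `c`, since for `i < 0` the
weighted norm of `d i` is at most a constant times that of `c (L + i)`.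
-/

open Filter

/-- A nonzero sequence of `p`-adic integers has a term of minimal valuation. -/
lemma exists_min_valuation (p : ℕ) [Fact p.Prime] (c : ℤ → ℤ_[p]) (hc0 : c ≠ 0) :
    ∃ k : ℕ, (∀ i : ℤ, ‖c i‖ ≤ (p : ℝ) ^ (-(k : ℤ))) ∧
      ∃ i : ℤ, ‖c i‖ = (p : ℝ) ^ (-(k : ℤ)) := by
  classical
  have hex : ∃ n : ℕ, ∃ i : ℤ, ‖c i‖ = (p : ℝ) ^ (-(n : ℤ)) := by
    obtain ⟨i, hi⟩ := Function.ne_iff.mp hc0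
    exact ⟨(c i).valuation, i, PadicInt.norm_eq_zpow_neg_valuation hi⟩
  have hp1 : (1 : ℝ) ≤ p := by exact_mod_cast (Fact.out : p.Prime).one_lt.le
  refine ⟨Nat.find hex, fun i => ?_, Nat.find_spec hex⟩
  by_cases hi : c i = 0
  · rw [hi, norm_zero]; positivity
  · have h := PadicInt.norm_eq_zpow_neg_valuation hi
    have hle : Nat.find hex ≤ (c i).valuation := Nat.find_min' hex ⟨i, h⟩
    rw [h]
    exact zpow_le_zpow_right₀ hp1 (by omega)

/-- The norms of an overconvergent sequence tend to `0` at `-∞`, so every norm level is attained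
only on a set of indices that is bounded below. -/
lemma exists_lower_bound (p : ℕ) [Fact p.Prime] (m : ℕ) (c : ℤ → ℤ_[p])
    (hc : IsOverconvergent p m c) {r : ℝ} (hr : 0 < r) :
    ∃ b : ℤ, ∀ i : ℤ, ‖c i‖ = r → b ≤ i := by
  have hp1 : (1 : ℝ) ≤ p := by exact_mod_cast (Fact.out : p.Prime).one_lt.le
  obtain ⟨b, hb⟩ := eventually_atBot.mp (hc.2.eventually_lt_const hr)
  refine ⟨min b 0, fun i hi => ?_⟩
  by_contra! hlt
  have h1 := hb i (by omega)
  have hi0 : (i : ℝ) ≤ 0 := by exact_mod_cast (by omega : i ≤ 0)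
  have h2 : (1 : ℝ) ≤ (p : ℝ) ^ (-(i : ℝ) / (m : ℝ)) :=
    Real.one_le_rpow hp1 (div_nonneg (by linarith) (by positivity))
  have h3 : ‖c i‖ * (p : ℝ) ^ (-(i : ℝ) / (m : ℝ)) < r := h1
  rw [hi] at h3
  nlinarith

/-- The comparison of exponents far to the left, where `-i ≥ m * P`. -/
lemma exponent_le {m P k L i : ℝ} (hm : 1 ≤ m) (hk : 0 ≤ k) (hP : k + |L| + 1 ≤ P)
    (hi : m * P ≤ -i) : k + (L + i) / m ≤ i / (m * P) := by
  have hP1 : 1 ≤ P := by linarith [abs_nonneg L]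
  have hm0 : 0 < m := by linarith
  have hP0 : 0 < P := by linarith
  have hL : L ≤ m * |L| := by nlinarith [abs_nonneg L, le_abs_self L]
  have h1 : m * P * (P - 1) ≤ -i * (P - 1) := mul_le_mul_of_nonneg_right hi (by linarith)
  have h2 : m * P * (k + |L|) ≤ m * P * (P - 1) :=
    mul_le_mul_of_nonneg_left (by linarith) (by positivity)
  have h3 : P * L ≤ P * (m * |L|) := mul_le_mul_of_nonneg_left hL hP0.le
  rw [le_div_iff₀ (by positivity)]
  have : (k + (L + i) / m) * (m * P) = k * m * P + (L + i) * P := by field_simp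
  rw [this]
  nlinarith

/-- Overconvergence of the shifted and normalized sequence, for any `P ≥ k + |L| + 1`. -/
lemma isOverconvergent_shift (p : ℕ) [Fact p.Prime] (m P k : ℕ) (L : ℤ) (hm : 1 ≤ m)
    (hP : k + L.natAbs + 1 ≤ P) (c d : ℤ → ℤ_[p]) (hc : IsOverconvergent p m c)
    (hd : ∀ i, ‖d i‖ = (p : ℝ) ^ (k : ℝ) * ‖c (L + i)‖) (hlt : ∀ i < 0, ‖d i‖ < 1) :
    IsOverconvergent p (m * P) d := by
  have hp1 : (1 : ℝ) ≤ p := by exact_mod_cast (Fact.out : p.Prime).one_lt.le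
  have hp0 : (0 : ℝ) < p := by linarith
  have hmR : (1 : ℝ) ≤ m := by exact_mod_cast hm
  have hPR : (k : ℝ) + |(L : ℝ)| + 1 ≤ P := by
    have : ((k + L.natAbs + 1 : ℕ) : ℝ) ≤ P := by exact_mod_cast hP
    simpa [Nat.cast_natAbs] using this
  have hP1 : (1 : ℝ) ≤ P := by
    have : (0 : ℝ) ≤ k := by positivity
    linarith [abs_nonneg (L : ℝ)]
  have hmP : (0 : ℝ) < m * P := by positivity
  constructor
  · intro i hi
    push_cast
    rcases le_or_gt (-(i : ℝ)) (m * P) with h | h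
    · -- discreteness of the norm: `‖d i‖ < 1` means `‖d i‖ ≤ p⁻¹`
      have h1 : ‖d i‖ ≤ (p : ℝ) ^ (-1 : ℝ) := by
        have := (PadicInt.norm_le_pow_iff_norm_lt_pow_add_one (d i) (-1)).mpr
          (by simpa using hlt i hi)
        rw [Real.rpow_neg_one]
        simpa using this
      refine h1.trans (Real.rpow_le_rpow_of_exponent_le hp1 ?_)
      rw [le_div_iff₀ hmP]
      linarith
    · have hneg : L + i < 0 := by
        have : (L : ℝ) + i < 0 := by
          have : (P : ℝ) ≤ m * P := by nlinarith
          have : (0 : ℝ) ≤ k := by positivity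
          linarith [le_abs_self (L : ℝ)]
        exact_mod_cast this
      have h1 := hc.1 _ hneg
      push_cast at h1
      calc ‖d i‖ = (p : ℝ) ^ (k : ℝ) * ‖c (L + i)‖ := hd i
        _ ≤ (p : ℝ) ^ (k : ℝ) * (p : ℝ) ^ (((L : ℝ) + i) / m) := by gcongr
        _ = (p : ℝ) ^ ((k : ℝ) + ((L : ℝ) + i) / m) := (Real.rpow_add hp0 _ _).symm
        _ ≤ _ := Real.rpow_le_rpow_of_exponent_le hp1
          (exponent_le hmR (by positivity) hPR h.le)
  · have ht : Tendsto (fun i : ℤ => L + i) atBot atBot := tendsto_atBot_add_const_left _ L tendsto_id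
    have h1 := (hc.2.comp ht).const_mul ((p : ℝ) ^ ((k : ℝ) + (L : ℝ) / m))
    rw [mul_zero] at h1
    refine squeeze_zero' (Eventually.of_forall fun i => by positivity) ?_ h1
    filter_upwards [eventually_lt_atBot (0 : ℤ)] with i hi
    have hiR : (i : ℝ) < 0 := by exact_mod_cast hi
    simp only [Function.comp_apply]
    push_cast
    -- the factor `p ^ (L / m)` cancels the shift in the weight of `c (L + i)`
    have h2 : -(i : ℝ) / (m * P) ≤ (L : ℝ) / m + -((L : ℝ) + i) / m := by
      have : (L : ℝ) / m + -((L : ℝ) + i) / m = -(i : ℝ) / m := by ring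
      rw [this]
      exact div_le_div_of_nonneg_left (by linarith) (by linarith) (by nlinarith)
    calc ‖d i‖ * (p : ℝ) ^ (-(i : ℝ) / (m * P))
        ≤ ‖d i‖ * (p : ℝ) ^ ((L : ℝ) / m + -((L : ℝ) + i) / m) := by
          gcongr
      _ = _ := by
          rw [hd i, Real.rpow_add hp0, Real.rpow_add hp0]
          ring

/-- Let `m_j = (p-1) * e * p^(j-1)` and let `c` be a nonzero
`m_N`-overconvergent sequence.  Then the minimum `k` of the valuations
`v_p(c i)` exists (expressed via norms: `‖c i‖ ≤ p^(-k)` for all `i`, with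
equality for some `i`), the set of indices realizing it has a least element
`L`, and there are `M ≥ 1` and an `m_{N+M}`-overconvergent sequence `d` with
`v_p(d 0) = 0` (i.e. `‖d 0‖ = 1`) such that `c (L + i) = p^k * d i` for all
`i`. -/
theorem stmt4 (p : ℕ) [Fact p.Prime] (e N : ℕ) (he : 1 ≤ e) (hN : 1 ≤ N)
    (c : ℤ → ℤ_[p]) (hc : IsOverconvergent p ((p - 1) * e * p ^ (N - 1)) c)
    (hc0 : c ≠ 0) :
    ∃ k : ℕ, (∀ i : ℤ, ‖c i‖ ≤ (p : ℝ) ^ (-(k : ℤ))) ∧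
      ∃ L : ℤ, IsLeast {i : ℤ | ‖c i‖ = (p : ℝ) ^ (-(k : ℤ))} L ∧
        ∃ M : ℕ, 1 ≤ M ∧ ∃ d : ℤ → ℤ_[p],
          (∀ i : ℤ, c (L + i) = (p : ℤ_[p]) ^ k * d i) ∧
          IsOverconvergent p ((p - 1) * e * p ^ (N + M - 1)) d ∧ ‖d 0‖ = 1 := by
  have hpp : p.Prime := Fact.out
  have hp0 : (0 : ℝ) < p := by exact_mod_cast hpp.pos
  obtain ⟨k, hk, i₀, hi₀⟩ := exists_min_valuation p c hc0
  have hr : (0 : ℝ) < (p : ℝ) ^ (-(k : ℤ)) := by positivity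
  obtain ⟨b, hb⟩ := exists_lower_bound p _ c hc hr
  obtain ⟨L, hL, hLmin⟩ := Int.exists_least_of_bdd
    (P := fun i => ‖c i‖ = (p : ℝ) ^ (-(k : ℤ))) ⟨b, hb⟩ ⟨i₀, hi₀⟩
  have hdvd : ∀ i, ∃ x, c (L + i) = (p : ℤ_[p]) ^ k * x := fun i =>
    Ideal.mem_span_singleton.mp ((PadicInt.norm_le_pow_iff_mem_span_pow _ k).mp (hk (L + i)))
  choose d hd using hdvd
  have hnorm : ∀ i, ‖c (L + i)‖ = (p : ℝ) ^ (-(k : ℤ)) * ‖d i‖ := fun i => by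
    rw [hd i, norm_mul, PadicInt.norm_p_pow]
  have hnorm' : ∀ i, ‖d i‖ = (p : ℝ) ^ (k : ℝ) * ‖c (L + i)‖ := fun i => by
    rw [hnorm i, ← mul_assoc, Real.rpow_natCast, zpow_neg, zpow_natCast,
      mul_inv_cancel₀ (by positivity), one_mul]
  refine ⟨k, hk, L, ⟨hL, fun i hi => hLmin i hi⟩, k + L.natAbs + 1, by omega, d, hd, ?_, ?_⟩
  · have hm : 1 ≤ (p - 1) * e * p ^ (N - 1) :=
      Nat.mul_pos (Nat.mul_pos (Nat.sub_pos_of_lt hpp.one_lt) he) (pow_pos hpp.pos _)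
    have hexp : (p - 1) * e * p ^ (N + (k + L.natAbs + 1) - 1) =
        (p - 1) * e * p ^ (N - 1) * p ^ (k + L.natAbs + 1) := by
      rw [mul_assoc _ (p ^ (N - 1)), ← pow_add]
      congr 2
      omega
    rw [hexp]
    refine isOverconvergent_shift p _ _ k L hm (Nat.lt_pow_self hpp.one_lt).le c d hc hnorm' ?_
    -- minimality of `L`: for `i < 0` the norm of `c (L + i)` is not maximal
    intro i hi
    have h1 : ‖c (L + i)‖ < (p : ℝ) ^ (-(k : ℤ)) :=
      lt_of_le_of_ne (hk _) fun h => by have := hLmin _ h; omega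
    rw [hnorm i] at h1
    exact (mul_lt_iff_lt_one_right hr).mp h1
  · have h := hnorm 0
    rw [add_zero, hL] at h
    exact (mul_eq_left₀ hr.ne').mp h.symm
end

section
/- Let p be a prime and m a positive integer. If b : ℤ → ℤ_p and c : ℤ → ℤ_p are both m-overconvergent sequences, then for every k ∈ ℤ the family (b_j·c_{k−j})_{j∈ℤ} is summable in ℤ_p, and the convolution sequence d : ℤ → ℤ_p defined by d_k = ∑_{j∈ℤ} b_j·c_{k−j} is again m-overconvergent. -/
/-!
Weight the `k`-th coefficient by `p ^ (-k/m)`. For an overconvergent sequence all the weighted norms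
are at most `1`: for `k < 0` by definition, for `k ≥ 0` because the norm and the weight both are.
The weights are multiplicative, so the weighted norm of `b j * c (k - j)` is the product of the
weighted norms of `b j` and `c (k - j)`, and is bounded by `1` and by each of them. Hence the terms
tend to `0` as `j → ±∞`, which gives summability in the complete nonarchimedean group `ℤ_[p]`, and
the ultrametric inequality transfers uniform bounds on the terms to the sum. For the limit, if both
weighted norms are at most `ε` at indices `≤ K`, then for `k ≤ 2K` each pair `j`, `k - j` has a
member `≤ K`, so every term of the `k`-th sum has weighted norm at most `ε`.
-/

open Filter

/-- The weighted norm `‖c k‖ * p ^ (-k/m)`, i.e. `p ^ -(v_p (c k) + k/m)`. -/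
noncomputable def weightedNorm (p : ℕ) [Fact p.Prime] (m : ℕ) (c : ℤ → ℤ_[p]) (k : ℤ) : ℝ :=
  ‖c k‖ * (p : ℝ) ^ (-(k : ℝ) / (m : ℝ))

section

variable {p : ℕ} [Fact p.Prime] {m : ℕ} {b c : ℤ → ℤ_[p]}

lemma prime_cast_pos : (0 : ℝ) < p := by
  exact_mod_cast (Fact.out : p.Prime).pos

lemma weightedNorm_nonneg (k : ℤ) : 0 ≤ weightedNorm p m c k := by
  unfold weightedNorm
  positivity

lemma weightedNorm_le_one_iff (k : ℤ) :
    weightedNorm p m c k ≤ 1 ↔ ‖c k‖ ≤ (p : ℝ) ^ ((k : ℝ) / (m : ℝ)) := by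
  have hp : (0 : ℝ) < p := prime_cast_pos
  rw [weightedNorm, neg_div, Real.rpow_neg hp.le, ← div_eq_mul_inv,
    div_le_one (Real.rpow_pos_of_pos hp _)]

lemma IsOverconvergent.weightedNorm_le_one (hc : IsOverconvergent p m c) (k : ℤ) :
    weightedNorm p m c k ≤ 1 := by
  rw [weightedNorm_le_one_iff]
  rcases lt_or_ge k 0 with hk | hk
  · exact hc.1 k hk
  · have hp : (1 : ℝ) ≤ p := by exact_mod_cast (Fact.out : p.Prime).one_lt.le
    have hk' : (0 : ℝ) ≤ k := by exact_mod_cast hk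
    exact (PadicInt.norm_le_one _).trans (Real.one_le_rpow hp (by positivity))

lemma norm_mul_weight (k j : ℤ) :
    ‖b j * c (k - j)‖ * (p : ℝ) ^ (-(k : ℝ) / (m : ℝ)) =
      weightedNorm p m b j * weightedNorm p m c (k - j) := by
  have hw : (p : ℝ) ^ (-(k : ℝ) / (m : ℝ)) =
      (p : ℝ) ^ (-(j : ℝ) / (m : ℝ)) * (p : ℝ) ^ (-((k - j : ℤ) : ℝ) / (m : ℝ)) := by
    rw [← Real.rpow_add prime_cast_pos]
    congr 1
    push_cast
    ring
  rw [hw, norm_mul, weightedNorm, weightedNorm]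
  ring

lemma IsOverconvergent.summable_conv (hb : IsOverconvergent p m b) (hc : IsOverconvergent p m c)
    (k : ℤ) : Summable fun j : ℤ => b j * c (k - j) := by
  apply NonarchimedeanAddGroup.summable_of_tendsto_cofinite_zero
  have hw : (0 : ℝ) < (p : ℝ) ^ (-(k : ℝ) / (m : ℝ)) := Real.rpow_pos_of_pos prime_cast_pos _
  have key : Tendsto (fun j : ℤ => weightedNorm p m b j * weightedNorm p m c (k - j))
      cofinite (nhds 0) := by
    rw [Int.cofinite_eq]
    apply Tendsto.sup
    · exact squeeze_zero (fun j => mul_nonneg (weightedNorm_nonneg _) (weightedNorm_nonneg _))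
        (fun j => mul_le_of_le_one_right (weightedNorm_nonneg _) (hc.weightedNorm_le_one _)) hb.2
    · have hflip : Tendsto (fun j : ℤ => k - j) atTop atBot :=
        tendsto_atBot.2 fun a => (eventually_ge_atTop (k - a)).mono fun j hj => by omega
      exact squeeze_zero (fun j => mul_nonneg (weightedNorm_nonneg _) (weightedNorm_nonneg _))
        (fun j => mul_le_of_le_one_left (weightedNorm_nonneg _) (hb.weightedNorm_le_one _))
        (hc.2.comp hflip)
  rw [tendsto_zero_iff_norm_tendsto_zero]
  have h := key.div_const ((p : ℝ) ^ (-(k : ℝ) / (m : ℝ)))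
  rw [zero_div] at h
  refine h.congr fun j => ?_
  rw [← norm_mul_weight, mul_div_cancel_right₀ _ hw.ne']

/-- The ultrametric inequality for the weighted norm of a convolution. -/
lemma weightedNorm_conv_le {k : ℤ} {C : ℝ} (hC : 0 ≤ C)
    (h : ∀ j, weightedNorm p m b j * weightedNorm p m c (k - j) ≤ C) :
    weightedNorm p m (fun k => ∑' j : ℤ, b j * c (k - j)) k ≤ C := by
  have hw : (0 : ℝ) < (p : ℝ) ^ (-(k : ℝ) / (m : ℝ)) := Real.rpow_pos_of_pos prime_cast_pos _
  rw [weightedNorm, ← le_div_iff₀ hw]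
  refine IsUltrametricDist.norm_tsum_le_of_forall_le_of_nonneg (by positivity) fun j => ?_
  rw [le_div_iff₀ hw, norm_mul_weight]
  exact h j

end

/-- If `b` and `c` are `m`-overconvergent sequences, then for
every `k` the family `(b j * c (k-j))_{j ∈ ℤ}` is summable in `ℤ_[p]`, and the
convolution `d k = ∑' j, b j * c (k-j)` is again `m`-overconvergent. -/
theorem stmt5 (p : ℕ) [Fact p.Prime] (m : ℕ) (hm : 0 < m) (b c : ℤ → ℤ_[p])
    (hb : IsOverconvergent p m b) (hc : IsOverconvergent p m c) :
    (∀ k : ℤ, Summable fun j : ℤ => b j * c (k - j)) ∧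
      IsOverconvergent p m (fun k : ℤ => ∑' j : ℤ, b j * c (k - j)) := by
  refine ⟨hb.summable_conv hc, fun k _ => ?_, ?_⟩
  · exact (weightedNorm_le_one_iff (c := fun k => ∑' j : ℤ, b j * c (k - j)) k).1
      (weightedNorm_conv_le zero_le_one fun j =>
        mul_le_one₀ (hb.weightedNorm_le_one _) (weightedNorm_nonneg _) (hc.weightedNorm_le_one _))
  · change Tendsto (weightedNorm p m fun k => ∑' j : ℤ, b j * c (k - j)) atBot (nhds 0)
    refine tendsto_order.2 ⟨fun a ha => Eventually.of_forall fun k =>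
      ha.trans_le (weightedNorm_nonneg k), fun ε hε => ?_⟩
    have hbc := (hb.2.eventually_lt_const (half_pos hε)).and
      (hc.2.eventually_lt_const (half_pos hε))
    obtain ⟨K, hK⟩ := eventually_atBot.1 hbc
    filter_upwards [eventually_le_atBot (2 * K)] with k hk
    refine (weightedNorm_conv_le (half_pos hε).le fun j => ?_).trans_lt (half_lt_self hε)
    -- one of `j`, `k - j` is at most `K` since their sum is at most `2 * K`
    rcases le_total j K with hj | hj
    · exact (mul_le_of_le_one_right (weightedNorm_nonneg _) (hc.weightedNorm_le_one _)).trans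
        (hK j hj).1.le
    · exact (mul_le_of_le_one_left (weightedNorm_nonneg _) (hb.weightedNorm_le_one _)).trans
        (hK (k - j) (by omega)).2.le
end

section
/- Let p be a prime and m a positive integer. Let c : ℤ → ℤ_p be a sequence with v_p(c_0) = 0, with v_p(c_k) + k/m > 0 (strictly) for every k < 0, and with v_p(c_k) + k/m → +∞ as k → −∞. Then there exists a sequence d : ℤ → ℤ_p with v_p(d_0) = 0, v_p(d_k) + k/m > 0 for every k < 0, and v_p(d_k) + k/m → +∞ as k → −∞, such that d is a convolution inverse of c: for every k ∈ ℤ the family (c_j·d_{k−j})_{j∈ℤ} is summable in ℤ_p and ∑_{j∈ℤ} c_j·d_{k−j} equals 1 if k = 0 and equals 0 otherwise. -/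
/-!
Put `w k = p ^ (-k / m)`, a positive multiplicative weight on `ℤ`.  The hypotheses say that
`‖c k‖ * w k` is `1` at `k = 0`, is `< 1` at every `k < 0`, and tends to `0` as `k → -∞`.  For
`k > 0` both `‖c k‖ * w k ≤ w k < 1` and `w k → 0` hold for free, because `c k` is a `p`-adic
integer.  Hence `c = c₀ (1 - x)`, where `x` has no constant term, `‖x k‖ * w k` tends to `0` along
the cofinite filter and is bounded by some `q < 1` (`exists_uniform_bound`): the weighted Gauss norm
of `x` is less than `1`.

The inverse is `c₀⁻¹ ∑ₙ xⁿ`.  The convolution powers `xⁿ` (`geomTerm`) are weighted null sequences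
of weighted norm at most `qⁿ`, since the ultrametric inequality makes the weighted norm
submultiplicative.  So the geometric series converges coefficientwise to a weighted null sequence
(`geomSum_null`), and interchanging the two summations gives `x * ∑ₙ xⁿ = ∑ₙ xⁿ - 1`
(`tsum_mul_geomSum`).
-/

open Filter
open scoped Topology

/-- Sequences whose weighted coefficients `‖x k‖ * w k` tend to `0` at both ends of `ℤ`. -/
def WeightedNull {p : ℕ} [Fact p.Prime] (w : ℤ → ℝ) (x : ℤ → ℤ_[p]) : Prop :=
  Tendsto (fun k => ‖x k‖ * w k) cofinite (𝓝 0)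

/-- The `n`-th convolution power of `x`, i.e. the coefficient sequence of `(∑ x_k T^k)^n`. -/
noncomputable def geomTerm {p : ℕ} [Fact p.Prime] (x : ℤ → ℤ_[p]) : ℕ → ℤ → ℤ_[p]
  | 0 => fun k => if k = 0 then 1 else 0
  | n + 1 => fun k => ∑' j, x j * geomTerm x n (k - j)

/-- The coefficientwise sum `∑ₙ xⁿ` of the convolution powers of `x`. -/
noncomputable def geomSum {p : ℕ} [Fact p.Prime] (x : ℤ → ℤ_[p]) (k : ℤ) : ℤ_[p] :=
  ∑' n, geomTerm x n k

section Weighted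

variable {p : ℕ} [Fact p.Prime] {w : ℤ → ℝ} {x y : ℤ → ℤ_[p]} {q : ℝ}

lemma norm_conv_term_mul (hmul : ∀ a b, w (a + b) = w a * w b) (k j : ℤ) :
    ‖x j * y (k - j)‖ * w k = (‖x j‖ * w j) * (‖y (k - j)‖ * w (k - j)) := by
  have h : w k = w j * w (k - j) := by rw [← hmul]; congr 1; ring
  rw [norm_mul, h]; ring

/-- An ultrametric sum has weighted norm at most any bound for its terms. -/
lemma norm_tsum_mul_le {ι : Type*} {f : ι → ℤ_[p]} {a C : ℝ} (ha : 0 < a) (hC : 0 ≤ C)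
    (h : ∀ i, ‖f i‖ * a ≤ C) : ‖∑' i, f i‖ * a ≤ C := by
  rw [← le_div_iff₀ ha]
  exact IsUltrametricDist.norm_tsum_le_of_forall_le_of_nonneg (by positivity)
    fun i => (le_div_iff₀ ha).2 (h i)

lemma summable_of_tendsto_norm_mul {ι : Type*} {f : ι → ℤ_[p]} {a : ℝ} (ha : 0 < a)
    (h : Tendsto (fun i => ‖f i‖ * a) cofinite (𝓝 0)) : Summable f := by
  apply NonarchimedeanAddGroup.summable_of_tendsto_cofinite_zero
  rw [tendsto_zero_iff_norm_tendsto_zero]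
  have h' := h.mul_const a⁻¹
  simpa [mul_assoc, ha.ne'] using h'

lemma summable_conv (hw : ∀ k, 0 < w k) (hmul : ∀ a b, w (a + b) = w a * w b)
    (hx : WeightedNull w x) (hy : WeightedNull w y) (k : ℤ) :
    Summable fun j => x j * y (k - j) := by
  apply summable_of_tendsto_norm_mul (hw k)
  simp only [norm_conv_term_mul hmul]
  have hinj : Function.Injective fun j : ℤ => k - j := fun a b h => by simpa using h
  simpa using hx.mul (hy.comp hinj.tendsto_cofinite)

/-- The convolution of weighted null sequences is weighted null: only finitely many pairs `(i, j)`
have a term that is not small, so only finitely many sums `i + j` are affected. -/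
lemma WeightedNull.conv (hw : ∀ k, 0 < w k) (hmul : ∀ a b, w (a + b) = w a * w b)
    (hx : WeightedNull w x) (hy : WeightedNull w y) :
    WeightedNull w fun k => ∑' j, x j * y (k - j) := by
  have hpair := tendsto_mul_cofinite_nhds_zero hx hy
  rw [WeightedNull, Metric.tendsto_nhds]
  intro ε hε
  have hfin : {i : ℤ × ℤ | ¬ (‖x i.1‖ * w i.1) * (‖y i.2‖ * w i.2) < ε / 2}.Finite :=
    hpair.eventually_lt_const (half_pos hε)
  refine (hfin.image fun i => i.1 + i.2).subset ?_
  intro k hk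
  by_contra hcon
  apply hk
  have hb : ‖∑' j, x j * y (k - j)‖ * w k ≤ ε / 2 := by
    refine norm_tsum_mul_le (hw k) (half_pos hε).le fun j => ?_
    rw [norm_conv_term_mul hmul]
    by_contra hj
    exact hcon ⟨(j, k - j), fun h => hj h.le, by simp⟩
  have h0 : 0 ≤ ‖∑' j, x j * y (k - j)‖ * w k := mul_nonneg (norm_nonneg _) (hw k).le
  simp only [Set.mem_ofPred_eq, Real.dist_eq, sub_zero]
  rw [abs_of_nonneg h0]
  linarith

lemma geomTerm_null (hw : ∀ k, 0 < w k) (hmul : ∀ a b, w (a + b) = w a * w b)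
    (hx : WeightedNull w x) (n : ℕ) : WeightedNull w (geomTerm x n) := by
  induction n with
  | zero =>
    apply tendsto_const_nhds.congr'
    filter_upwards [(Set.finite_singleton (0 : ℤ)).compl_mem_cofinite] with k hk
    have : k ≠ 0 := hk
    simp [geomTerm, this]
  | succ n ih => exact hx.conv hw hmul ih

lemma geomTerm_bound (hw : ∀ k, 0 < w k) (hmul : ∀ a b, w (a + b) = w a * w b)
    (hq : 0 ≤ q) (hxq : ∀ k, ‖x k‖ * w k ≤ q) (n : ℕ) (k : ℤ) :
    ‖geomTerm x n k‖ * w k ≤ q ^ n := by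
  induction n generalizing k with
  | zero =>
    have h0 : w 0 = 1 := by
      have h := hmul 0 0
      have h' := (hw 0).ne'
      rw [add_zero] at h
      exact (mul_eq_left₀ h').1 h.symm
    by_cases hk : k = 0 <;> simp [geomTerm, hk, h0]
  | succ n ih =>
    refine norm_tsum_mul_le (hw k) (by positivity) fun j => ?_
    rw [norm_conv_term_mul hmul, pow_succ']
    exact mul_le_mul (hxq j) (ih _) (mul_nonneg (norm_nonneg _) (hw _).le) hq

lemma geomTerm_summable (hw : ∀ k, 0 < w k) (hmul : ∀ a b, w (a + b) = w a * w b)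
    (hq : 0 ≤ q) (hq1 : q < 1) (hxq : ∀ k, ‖x k‖ * w k ≤ q) (k : ℤ) :
    Summable fun n => geomTerm x n k := by
  apply summable_of_tendsto_norm_mul (hw k)
  rw [Nat.cofinite_eq_atTop]
  exact squeeze_zero (fun n => mul_nonneg (norm_nonneg _) (hw k).le)
    (fun n => geomTerm_bound hw hmul hq hxq n k) (tendsto_pow_atTop_nhds_zero_of_lt_one hq hq1)

/-- The terms `xⁿ` with `n ≥ N` are uniformly small, and the finitely many others are null. -/
lemma geomSum_null (hw : ∀ k, 0 < w k) (hmul : ∀ a b, w (a + b) = w a * w b)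
    (hq : 0 ≤ q) (hq1 : q < 1) (hx : WeightedNull w x) (hxq : ∀ k, ‖x k‖ * w k ≤ q) :
    WeightedNull w (geomSum x) := by
  rw [WeightedNull, Metric.tendsto_nhds]
  intro ε hε
  obtain ⟨N, hN⟩ := exists_pow_lt_of_lt_one (half_pos hε) hq1
  have hsmall : ∀ᶠ k in cofinite, ∀ n ∈ Finset.range N, ‖geomTerm x n k‖ * w k < ε / 2 :=
    (Finset.eventually_all _).2 fun n _ =>
      (geomTerm_null hw hmul hx n).eventually_lt_const (half_pos hε)
  filter_upwards [hsmall] with k hk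
  have hb : ‖geomSum x k‖ * w k ≤ ε / 2 := by
    refine norm_tsum_mul_le (hw k) (half_pos hε).le fun n => ?_
    rcases lt_or_ge n N with h | h
    · exact (hk n (Finset.mem_range.2 h)).le
    · exact (geomTerm_bound hw hmul hq hxq n k).trans
        ((pow_le_pow_of_le_one hq hq1.le h).trans hN.le)
  have h0 : 0 ≤ ‖geomSum x k‖ * w k := mul_nonneg (norm_nonneg _) (hw k).le
  rw [Real.dist_eq, sub_zero, abs_of_nonneg h0]
  linarith

lemma geomSum_eq (hw : ∀ k, 0 < w k) (hmul : ∀ a b, w (a + b) = w a * w b)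
    (hq : 0 ≤ q) (hq1 : q < 1) (hxq : ∀ k, ‖x k‖ * w k ≤ q) (k : ℤ) :
    geomSum x k = (if k = 0 then 1 else 0) + ∑' n, geomTerm x (n + 1) k :=
  (geomTerm_summable hw hmul hq hq1 hxq k).tsum_eq_zero_add

lemma geomSum_tail_bound (hw : ∀ k, 0 < w k) (hmul : ∀ a b, w (a + b) = w a * w b)
    (hq : 0 ≤ q) (hq1 : q < 1) (hxq : ∀ k, ‖x k‖ * w k ≤ q) (k : ℤ) :
    ‖∑' n, geomTerm x (n + 1) k‖ * w k ≤ q :=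
  norm_tsum_mul_le (hw k) hq fun n => (geomTerm_bound hw hmul hq hxq (n + 1) k).trans
    (pow_le_of_le_one hq hq1.le n.succ_ne_zero)

/-- The identity `x * ∑ₙ xⁿ = ∑ₙ xⁿ⁺¹`, by interchanging the sums over `j` and `n`. -/
lemma tsum_mul_geomSum (hw : ∀ k, 0 < w k) (hmul : ∀ a b, w (a + b) = w a * w b)
    (hq : 0 ≤ q) (hq1 : q < 1) (hx : WeightedNull w x) (hxq : ∀ k, ‖x k‖ * w k ≤ q) (k : ℤ) :
    ∑' j, x j * geomSum x (k - j) = ∑' n, geomTerm x (n + 1) k := by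
  have hq' : Tendsto (fun n : ℕ => q ^ n) cofinite (𝓝 0) := by
    rw [Nat.cofinite_eq_atTop]; exact tendsto_pow_atTop_nhds_zero_of_lt_one hq hq1
  have hsum : Summable (Function.uncurry fun (j : ℤ) (n : ℕ) => x j * geomTerm x n (k - j)) := by
    apply summable_of_tendsto_norm_mul (hw k)
    refine squeeze_zero (fun i => mul_nonneg (norm_nonneg _) (hw k).le) (fun i => ?_)
      (tendsto_mul_cofinite_nhds_zero hx hq')
    simp only [Function.uncurry]
    rw [norm_conv_term_mul hmul]
    exact mul_le_mul_of_nonneg_left (geomTerm_bound hw hmul hq hxq _ _)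
      (mul_nonneg (norm_nonneg _) (hw _).le)
  calc ∑' j, x j * geomSum x (k - j) = ∑' j, ∑' n, x j * geomTerm x n (k - j) :=
        tsum_congr fun j => ((geomTerm_summable hw hmul hq hq1 hxq (k - j)).tsum_mul_left _).symm
    _ = ∑' n, ∑' j, x j * geomTerm x n (k - j) := hsum.tsum_comm.symm
    _ = ∑' n, geomTerm x (n + 1) k := rfl

end Weighted

/-- Real numbers less than `1` that tend to `0` are uniformly bounded away from `1`. -/
lemma exists_uniform_bound {f : ℤ → ℝ} (hf : Tendsto f cofinite (𝓝 0)) (h1 : ∀ k, f k < 1) :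
    ∃ q, 0 ≤ q ∧ q < 1 ∧ ∀ k, f k ≤ q := by
  have hfin : {k | ¬ f k < 1 / 2}.Finite := hf.eventually_lt_const (by norm_num)
  obtain ⟨a, -, ha⟩ := Set.exists_max_image _ f (hfin.insert 0) (Set.insert_nonempty _ _)
  refine ⟨max (1 / 2) (f a), le_max_of_le_left (by norm_num), max_lt (by norm_num) (h1 a), ?_⟩
  intro k
  by_cases hk : f k < 1 / 2
  · exact le_max_of_le_left hk.le
  · exact le_max_of_le_right (ha k (Set.mem_insert_of_mem _ hk))

/-- Let `c : ℤ → ℤ_[p]` satisfy `v_p(c 0) = 0` (i.e.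
`‖c 0‖ = 1`), the strict growth condition `v_p(c k) + k/m > 0` for all `k < 0`
(i.e. `‖c k‖ < p^(k/m)`), and `v_p(c k) + k/m → +∞` as `k → -∞` (i.e.
`‖c k‖ * p^(-k/m) → 0`).  Then there is a sequence `d` with the same three
properties which is a convolution inverse of `c`: for every `k` the family
`(c j * d (k-j))_{j ∈ ℤ}` is summable and its sum is `1` if `k = 0` and `0`
otherwise. -/
theorem stmt6 (p : ℕ) [Fact p.Prime] (m : ℕ) (hm : 0 < m) (c : ℤ → ℤ_[p])
    (hc0 : ‖c 0‖ = 1)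
    (hneg : ∀ k : ℤ, k < 0 → ‖c k‖ < (p : ℝ) ^ ((k : ℝ) / (m : ℝ)))
    (htend : Tendsto (fun k : ℤ => ‖c k‖ * (p : ℝ) ^ (-(k : ℝ) / (m : ℝ)))
      atBot (nhds 0)) :
    ∃ d : ℤ → ℤ_[p], ‖d 0‖ = 1 ∧
      (∀ k : ℤ, k < 0 → ‖d k‖ < (p : ℝ) ^ ((k : ℝ) / (m : ℝ))) ∧
      Tendsto (fun k : ℤ => ‖d k‖ * (p : ℝ) ^ (-(k : ℝ) / (m : ℝ))) atBot (nhds 0) ∧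
      ∀ k : ℤ, Summable (fun j : ℤ => c j * d (k - j)) ∧
        ∑' j : ℤ, c j * d (k - j) = if k = 0 then 1 else 0 := by
  have hp1 : (1 : ℝ) < p := by exact_mod_cast (Fact.out : p.Prime).one_lt
  have hp0 : (0 : ℝ) < p := by linarith
  have hm' : (0 : ℝ) < m := by exact_mod_cast hm
  obtain ⟨w, hwdef⟩ : ∃ w : ℤ → ℝ, ∀ k, w k = (p : ℝ) ^ (-(k : ℝ) / (m : ℝ)) := ⟨_, fun _ => rfl⟩
  have hw : ∀ k, 0 < w k := fun k => by rw [hwdef]; positivity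
  have hmul : ∀ a b, w (a + b) = w a * w b := fun a b => by
    rw [hwdef, hwdef, hwdef, ← Real.rpow_add hp0]
    congr 1
    push_cast
    ring
  have hw0 : w 0 = 1 := by simp [hwdef]
  -- The growth condition `‖a‖ < p ^ (k / m)` is the weighted bound `‖a‖ * w k < 1`.
  have hiff : ∀ (a : ℤ_[p]) (k : ℤ), ‖a‖ < (p : ℝ) ^ ((k : ℝ) / (m : ℝ)) ↔ ‖a‖ * w k < 1 := by
    intro a k
    rw [hwdef, neg_div, Real.rpow_neg hp0.le, ← div_eq_mul_inv, div_lt_one (by positivity)]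
  have hwtop : Tendsto w atTop (𝓝 0) := by
    have h1 : Tendsto (fun k : ℤ => (k : ℝ) / m) atTop atTop :=
      tendsto_intCast_atTop_atTop.atTop_div_const hm'
    have h2 := (tendsto_rpow_atTop_of_base_gt_one _ hp1).comp h1
    refine h2.inv_tendsto_atTop.congr fun k => ?_
    rw [hwdef, neg_div, Real.rpow_neg hp0.le]
    rfl
  have hcnull : WeightedNull w c := by
    rw [WeightedNull, Int.cofinite_eq, tendsto_sup]
    refine ⟨by simpa only [hwdef] using htend, ?_⟩
    exact squeeze_zero (fun k => mul_nonneg (norm_nonneg _) (hw k).le)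
      (fun k => mul_le_of_le_one_left (hw k).le (PadicInt.norm_le_one _)) hwtop
  have hclt : ∀ k, k ≠ 0 → ‖c k‖ * w k < 1 := by
    intro k hk
    rcases lt_or_gt_of_ne hk with h | h
    · exact (hiff _ _).1 (hneg k h)
    · refine (mul_le_of_le_one_left (hw k).le (PadicInt.norm_le_one _)).trans_lt ?_
      rw [hwdef]
      have hk' : (0 : ℝ) < k := by exact_mod_cast h
      exact Real.rpow_lt_one_of_one_lt_of_neg hp1 (div_neg_of_neg_of_pos (by linarith) hm')
  obtain ⟨u, hu⟩ := (PadicInt.isUnit_iff.2 hc0).exists_right_inv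
  have hun : ‖u‖ = 1 := by
    have h := congrArg norm hu
    rwa [norm_mul, hc0, one_mul, norm_one] at h
  -- `x = 1 - c₀⁻¹ c`
  obtain ⟨x, hxdef⟩ : ∃ x : ℤ → ℤ_[p], ∀ j, x j = if j = 0 then 0 else -(u * c j) :=
    ⟨_, fun _ => rfl⟩
  have hxc : ∀ k, k ≠ 0 → ‖x k‖ = ‖c k‖ := fun k hk => by simp [hxdef, hk, hun]
  have hx0 : x 0 = 0 := by simp [hxdef]
  have hxnull : WeightedNull w x := by
    refine squeeze_zero (fun k => mul_nonneg (norm_nonneg _) (hw k).le) (fun k => ?_) hcnull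
    by_cases hk : k = 0
    · subst hk
      simpa [hx0] using mul_nonneg (norm_nonneg (c 0)) (hw 0).le
    · rw [hxc k hk]
  have hxlt : ∀ k, ‖x k‖ * w k < 1 := by
    intro k
    by_cases hk : k = 0
    · subst hk
      simp [hx0]
    · rw [hxc k hk]
      exact hclt k hk
  obtain ⟨q, hq, hq1, hxq⟩ := exists_uniform_bound hxnull hxlt
  have hsum := geomSum_eq hw hmul hq hq1 hxq
  have htail := geomSum_tail_bound hw hmul hq hq1 hxq
  have hgnull := geomSum_null hw hmul hq hq1 hxnull hxq
  have hdn : ∀ k, ‖u * geomSum x k‖ = ‖geomSum x k‖ := fun k => by rw [norm_mul, hun, one_mul]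
  have hdnull : WeightedNull w fun k => u * geomSum x k := by
    simpa only [WeightedNull, hdn] using hgnull
  refine ⟨fun k => u * geomSum x k, ?_, ?_, ?_, ?_⟩
  · have h := htail 0
    rw [hw0, mul_one] at h
    have hlt : ‖∑' n, geomTerm x (n + 1) 0‖ < 1 := h.trans_lt hq1
    simp only [hdn]
    rw [hsum 0, if_pos rfl, IsUltrametricDist.norm_add_eq_max_of_norm_ne_norm, norm_one,
      max_eq_left hlt.le]
    rw [norm_one]
    exact hlt.ne'
  · intro k hk
    rw [hiff, hdn, hsum k, if_neg hk.ne, zero_add]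
    exact (htail k).trans_lt hq1
  · have h := hdnull
    rw [WeightedNull, Int.cofinite_eq, tendsto_sup] at h
    simpa only [hwdef] using h.1
  · intro k
    refine ⟨summable_conv hw hmul hcnull hdnull k, ?_⟩
    have hterm : ∀ j, c j * (u * geomSum x (k - j)) =
        (if j = 0 then geomSum x k else 0) - x j * geomSum x (k - j) := by
      intro j
      by_cases hj : j = 0
      · subst hj
        rw [if_pos rfl, hx0, ← mul_assoc, hu]
        simp
      · rw [hxdef, if_neg hj, if_neg hj]
        ring
    have hs1 : Summable fun j : ℤ => if j = 0 then geomSum x k else 0 :=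
      (hasSum_ite_eq 0 _).summable
    rw [tsum_congr hterm, hs1.tsum_sub (summable_conv hw hmul hxnull hgnull k), tsum_ite_eq,
      tsum_mul_geomSum hw hmul hq hq1 hxnull hxq, hsum k, add_sub_cancel_right]
end

section
/- Let p be a prime and m a positive integer. If c : ℤ → ℤ_p is an m-overconvergent sequence with v_p(c_0) = 0, then there exists a (p·m)-overconvergent sequence d : ℤ → ℤ_p which is a convolution inverse of c: for every k ∈ ℤ the family (c_j·d_{k−j})_{j∈ℤ} is summable in ℤ_p and ∑_{j∈ℤ} c_j·d_{k−j} equals 1 if k = 0 and equals 0 otherwise. -/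
/-!
Put `τ = p^(-1/m)` and `ρ = p^(-1/(p*m))`, so `τ < ρ < 1`, and pick `σ` with `τ < σ < ρ`.
For the Gauss norm `|x|_σ = sup_k ‖x k‖ σ^k`, write `c = c 0 • (δ - y)` with `y 0 = 0`. The terms
of `y` of positive index contribute at most `σ` (because `‖y k‖ ≤ 1`), those of negative index at
most `τ / σ`, so `|y|_σ ≤ r := max σ (τ / σ) < 1` and `δ - y` is inverted by the geometric series
`∑ y^n` of convolution powers (`exists_geometric_inverse`).

The inverse `d` satisfies `‖d k‖ ≤ σ^(-k)` for all `k`. Since `σ < ρ`, this gives both the bound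
and the decay required for `(p*m)`-overconvergence.
-/

open Filter

/-- If `y` and `a` have Gauss norm at most `1` at radius `σ`, the terms of the convolution `y * a`
at a fixed index decay geometrically in both directions: for `j < 0` by the bound on `y`, for
`j ≥ 0` by the bound on `a`. -/
lemma norm_conv_term_le {p : ℕ} [Fact p.Prime] {σ : ℝ} (hσ0 : 0 < σ) (hσ1 : σ < 1)
    {y a : ℤ → ℤ_[p]} (hy : ∀ j, ‖y j‖ ≤ σ ^ (-j)) (ha : ∀ j, ‖a j‖ ≤ σ ^ (-j)) (k j : ℤ) :
    ‖y j * a (k - j)‖ ≤ σ ^ (-|k|) * σ ^ j.natAbs := by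
  rw [← zpow_natCast σ, ← zpow_add₀ hσ0.ne', Int.natCast_natAbs, norm_mul]
  rcases lt_or_ge j 0 with hj | hj
  · calc ‖y j‖ * ‖a (k - j)‖ ≤ ‖y j‖ * 1 := by gcongr; exact PadicInt.norm_le_one _
      _ ≤ σ ^ (-j) := by simpa using hy j
      _ ≤ _ := zpow_le_zpow_right_of_le_one₀ hσ0 hσ1.le (by
          rw [abs_of_neg hj]; linarith [abs_nonneg k])
  · calc ‖y j‖ * ‖a (k - j)‖ ≤ 1 * ‖a (k - j)‖ := by gcongr; exact PadicInt.norm_le_one _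
      _ ≤ σ ^ (-(k - j)) := by simpa using ha (k - j)
      _ ≤ _ := zpow_le_zpow_right_of_le_one₀ hσ0 hσ1.le (by
          rw [abs_of_nonneg hj]; linarith [le_abs_self k])

lemma summable_pow_natAbs {q : ℝ} (h0 : 0 ≤ q) (h1 : q < 1) :
    Summable (fun j : ℤ => q ^ j.natAbs) := by
  refine Summable.of_nat_of_neg ?_ ?_ <;> simpa using summable_geometric_of_lt_one h0 h1

lemma summable_conv_s7 {p : ℕ} [Fact p.Prime] {σ : ℝ} (hσ0 : 0 < σ) (hσ1 : σ < 1)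
    {y a : ℤ → ℤ_[p]} (hy : ∀ j, ‖y j‖ ≤ σ ^ (-j)) (ha : ∀ j, ‖a j‖ ≤ σ ^ (-j)) (k : ℤ) :
    Summable (fun j : ℤ => y j * a (k - j)) :=
  Summable.of_norm_bounded ((summable_pow_natAbs hσ0.le hσ1).mul_left _)
    (norm_conv_term_le hσ0 hσ1 hy ha k)

/-- The `n`-th convolution power of `y`; `convPow y 0` is the unit `δ`. -/
noncomputable def convPow {p : ℕ} [Fact p.Prime] (y : ℤ → ℤ_[p]) : ℕ → ℤ → ℤ_[p]
  | 0 => fun k => if k = 0 then 1 else 0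
  | n + 1 => fun k => ∑' j : ℤ, y j * convPow y n (k - j)

/-- Submultiplicativity of the Gauss norm on a single term of a convolution. -/
lemma norm_conv_term_le_pow {p : ℕ} [Fact p.Prime] {σ r : ℝ} (hσ0 : 0 < σ) (hr0 : 0 ≤ r)
    {y a : ℤ → ℤ_[p]} (hy : ∀ j, ‖y j‖ ≤ r * σ ^ (-j)) {n : ℕ}
    (ha : ∀ k, ‖a k‖ ≤ r ^ n * σ ^ (-k)) (k j : ℤ) :
    ‖y j * a (k - j)‖ ≤ r ^ (n + 1) * σ ^ (-k) := by
  have hk : σ ^ (-k) = σ ^ (-j) * σ ^ (-(k - j)) := by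
    rw [← zpow_add₀ hσ0.ne']; congr 1; ring
  rw [norm_mul]
  calc ‖y j‖ * ‖a (k - j)‖ ≤ (r * σ ^ (-j)) * (r ^ n * σ ^ (-(k - j))) :=
        mul_le_mul (hy j) (ha _) (norm_nonneg _) (by positivity)
    _ = _ := by rw [hk]; ring

lemma norm_convPow_le {p : ℕ} [Fact p.Prime] {σ r : ℝ} (hσ0 : 0 < σ) (hr0 : 0 ≤ r)
    {y : ℤ → ℤ_[p]} (hy : ∀ j, ‖y j‖ ≤ r * σ ^ (-j)) (n : ℕ) :
    ∀ k, ‖convPow y n k‖ ≤ r ^ n * σ ^ (-k) := by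
  induction n with
  | zero =>
    intro k
    by_cases hk : k = 0
    · simp [convPow, hk]
    · simp only [convPow, hk, if_false, norm_zero]; positivity
  | succ n ih =>
    intro k
    exact IsUltrametricDist.norm_tsum_le_of_forall_le_of_nonneg (by positivity)
      (norm_conv_term_le_pow hσ0 hr0 hy ih k)

/-- If `y` has Gauss norm at most `r < 1` at radius `σ < 1`, then `δ - y` has a right convolution
inverse of Gauss norm at most `1`, namely the sum of the convolution powers of `y`. -/
lemma exists_geometric_inverse {p : ℕ} [Fact p.Prime] {σ r : ℝ} (hσ0 : 0 < σ) (hσ1 : σ < 1)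
    (hr0 : 0 ≤ r) (hr1 : r < 1) {y : ℤ → ℤ_[p]} (hy : ∀ j, ‖y j‖ ≤ r * σ ^ (-j)) :
    ∃ d : ℤ → ℤ_[p], (∀ k, ‖d k‖ ≤ σ ^ (-k)) ∧
      ∀ k, Summable (fun j : ℤ => y j * d (k - j)) ∧
        d k = (if k = 0 then 1 else 0) + ∑' j : ℤ, y j * d (k - j) := by
  have ha := norm_convPow_le hσ0 hr0 hy
  have hle : ∀ (n : ℕ) (k : ℤ), r ^ n * σ ^ (-k) ≤ σ ^ (-k) := fun n k =>
    mul_le_of_le_one_left (by positivity) (pow_le_one₀ hr0 hr1.le)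
  have ha1 : ∀ n k, ‖convPow y n k‖ ≤ σ ^ (-k) := fun n k => (ha n k).trans (hle n k)
  have hy1 : ∀ j, ‖y j‖ ≤ σ ^ (-j) := fun j => (hy j).trans (by simpa using hle 1 j)
  have hsum : ∀ k, Summable (fun n => convPow y n k) := fun k =>
    Summable.of_norm_bounded ((summable_geometric_of_lt_one hr0 hr1).mul_right _)
      (fun n => ha n k)
  have hd : ∀ k, ‖∑' n, convPow y n k‖ ≤ σ ^ (-k) := fun k =>
    IsUltrametricDist.norm_tsum_le_of_forall_le_of_nonneg (by positivity) (fun n => ha1 n k)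
  refine ⟨fun k => ∑' n, convPow y n k, hd, fun k => ⟨summable_conv_s7 hσ0 hσ1 hy1 hd k, ?_⟩⟩
  -- The double family is bounded by a power of `r` and by a power of `σ`, hence by their
  -- geometric mean, which is summable over `ℤ × ℕ`.
  have hdbl : Summable (fun x : ℤ × ℕ => y x.1 * convPow y x.2 (k - x.1)) := by
    have hs1 : √r < 1 := by rw [Real.sqrt_lt' one_pos]; simpa using hr1
    have hq1 : √σ < 1 := by rw [Real.sqrt_lt' one_pos]; simpa using hσ1
    have hg := ((summable_pow_natAbs (Real.sqrt_nonneg σ) hq1).mul_of_nonneg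
      (summable_geometric_of_lt_one (Real.sqrt_nonneg r) hs1)
      (fun _ => by positivity) (fun _ => by positivity)).mul_left (σ ^ (-|k|))
    refine Summable.of_norm_bounded hg ?_
    rintro ⟨j, n⟩
    have h1 : ‖y j * convPow y n (k - j)‖ ≤ σ ^ (-|k|) * σ ^ j.natAbs :=
      norm_conv_term_le hσ0 hσ1 hy1 (ha1 n) k j
    have h2 : ‖y j * convPow y n (k - j)‖ ≤ σ ^ (-|k|) * r ^ n := by
      refine (norm_conv_term_le_pow hσ0 hr0 hy (ha n) k j).trans ?_
      rw [mul_comm]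
      refine mul_le_mul (zpow_le_zpow_right_of_le_one₀ hσ0 hσ1.le
        (neg_le_neg (le_abs_self k))) ?_ (by positivity) (by positivity)
      exact pow_le_pow_of_le_one hr0 hr1.le n.le_succ
    refine le_of_sq_le_sq ?_ (by positivity)
    calc ‖y j * convPow y n (k - j)‖ ^ 2
        ≤ (σ ^ (-|k|) * σ ^ j.natAbs) * (σ ^ (-|k|) * r ^ n) := by
          rw [sq]; exact mul_le_mul h1 h2 (norm_nonneg _) (by positivity)
      _ = (σ ^ (-|k|) * (√σ ^ j.natAbs * √r ^ n)) ^ 2 := by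
          nth_rewrite 2 [← Real.sq_sqrt hσ0.le]
          nth_rewrite 1 [← Real.sq_sqrt hr0]
          ring
  calc ∑' n, convPow y n k = convPow y 0 k + ∑' n, convPow y (n + 1) k :=
        (hsum k).tsum_eq_zero_add
    _ = (if k = 0 then 1 else 0) + ∑' n, ∑' j : ℤ, y j * convPow y n (k - j) := rfl
    _ = (if k = 0 then 1 else 0) + ∑' j : ℤ, ∑' n, y j * convPow y n (k - j) := by
        congr 1; exact Summable.tsum_comm hdbl
    _ = _ := by
        congr 1
        exact tsum_congr fun j => (hsum (k - j)).tsum_mul_left _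

/-- If `c` is `m`-overconvergent with `v_p(c 0) = 0` (i.e.
`‖c 0‖ = 1`), then there is a `(p*m)`-overconvergent sequence `d` which is a
convolution inverse of `c`: for every `k` the family `(c j * d (k-j))_{j ∈ ℤ}`
is summable and its sum is `1` if `k = 0` and `0` otherwise. -/
theorem stmt7 (p : ℕ) [Fact p.Prime] (m : ℕ) (hm : 0 < m) (c : ℤ → ℤ_[p])
    (hc : IsOverconvergent p m c) (hc0 : ‖c 0‖ = 1) :
    ∃ d : ℤ → ℤ_[p], IsOverconvergent p (p * m) d ∧
      ∀ k : ℤ, Summable (fun j : ℤ => c j * d (k - j)) ∧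
        ∑' j : ℤ, c j * d (k - j) = if k = 0 then 1 else 0 := by
  have hp1 : (1 : ℝ) < p := by exact_mod_cast (Fact.out : p.Prime).one_lt
  have hp0 : (0 : ℝ) < p := one_pos.trans hp1
  have hm0 : (0 : ℝ) < m := by exact_mod_cast hm
  have hpow : ∀ (M : ℝ) (k : ℤ), (p : ℝ) ^ ((k : ℝ) / M) = ((p : ℝ) ^ (-1 / M)) ^ (-k) := by
    intro M k
    rw [← Real.rpow_intCast, ← Real.rpow_mul hp0.le]
    congr 1
    push_cast
    ring
  obtain ⟨τ, hτ⟩ : ∃ τ : ℝ, τ = (p : ℝ) ^ (-1 / (m : ℝ)) := ⟨_, rfl⟩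
  obtain ⟨ρ, hρ⟩ : ∃ ρ : ℝ, ρ = (p : ℝ) ^ (-1 / ((p * m : ℕ) : ℝ)) := ⟨_, rfl⟩
  have hτ0 : 0 < τ := hτ ▸ Real.rpow_pos_of_pos hp0 _
  have hτρ : τ < ρ := by
    rw [hτ, hρ]
    refine Real.rpow_lt_rpow_of_exponent_lt hp1 ?_
    rw [neg_div, neg_div, neg_lt_neg_iff]
    push_cast
    exact one_div_lt_one_div_of_lt hm0 (by nlinarith)
  have hρ1 : ρ < 1 := by
    rw [hρ]
    refine Real.rpow_lt_one_of_one_lt_of_neg hp1 (div_neg_of_neg_of_pos (by norm_num) ?_)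
    push_cast
    positivity
  obtain ⟨σ, hτσ, hσρ⟩ := exists_between hτρ
  have hσ0 : 0 < σ := hτ0.trans hτσ
  have hρ0 : 0 < ρ := hσ0.trans hσρ
  have hσ1 : σ < 1 := hσρ.trans hρ1
  obtain ⟨u, hu⟩ := (PadicInt.isUnit_iff.2 hc0)
  have hun : ‖((u⁻¹ : ℤ_[p]ˣ) : ℤ_[p])‖ = 1 := PadicInt.norm_units _
  obtain ⟨y, hydef⟩ : ∃ y : ℤ → ℤ_[p],
      y = fun j => if j = 0 then 0 else -((u⁻¹ : ℤ_[p]ˣ) : ℤ_[p]) * c j := ⟨_, rfl⟩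
  have hy : ∀ j, ‖y j‖ ≤ max σ (τ / σ) * σ ^ (-j) := by
    intro j
    rcases lt_trichotomy j 0 with hj | hj | hj
    · have h1 : ‖y j‖ ≤ τ ^ (-j) := by
        simpa [hydef, hj.ne, hun, hτ, ← hpow] using hc.1 j hj
      have h2 : τ ^ (-j) = (τ / σ) ^ (-j) * σ ^ (-j) := by
        rw [← mul_zpow, div_mul_cancel₀ _ hσ0.ne']
      have h3 : (τ / σ) ^ (-j) ≤ τ / σ := by
        simpa using zpow_le_zpow_right_of_le_one₀ (div_pos hτ0 hσ0)
          ((div_lt_one hσ0).2 hτσ).le (by lia : (1 : ℤ) ≤ -j)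
      rw [h2] at h1
      refine h1.trans ?_
      gcongr
      exact h3.trans (le_max_right _ _)
    · simp only [hydef, hj, if_true, norm_zero]; positivity
    · calc ‖y j‖ ≤ 1 := PadicInt.norm_le_one _
        _ ≤ σ ^ (1 + -j) := one_le_zpow_of_nonpos₀ hσ0 hσ1.le (by lia)
        _ = σ * σ ^ (-j) := by rw [zpow_add₀ hσ0.ne', zpow_one]
        _ ≤ _ := by gcongr; exact le_max_left _ _
  obtain ⟨d, hd, hdy⟩ := exists_geometric_inverse hσ0 hσ1 (hσ0.le.trans (le_max_left _ _))
    (max_lt hσ1 ((div_lt_one hσ0).2 hτσ)) hy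
  refine ⟨fun k => ((u⁻¹ : ℤ_[p]ˣ) : ℤ_[p]) * d k, ⟨?_, ?_⟩, ?_⟩
  · intro k hk
    rw [hpow, ← hρ, norm_mul, hun, one_mul]
    refine (hd k).trans ?_
    exact zpow_le_zpow_left₀ (by lia) hσ0.le hσρ.le
  · -- `‖d k‖ ρ^k ≤ (σ/ρ)^(-k)`, which tends to `0` as `k → -∞`.
    have hlim : Tendsto (fun k : ℤ => (σ / ρ) ^ (-k).toNat) atBot (nhds 0) := by
      refine (tendsto_pow_atTop_nhds_zero_of_lt_one (by positivity)
        ((div_lt_one hρ0).2 hσρ)).comp ?_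
      refine tendsto_atTop.2 fun b => ?_
      filter_upwards [eventually_le_atBot (-(b : ℤ))] with k hk
      lia
    refine squeeze_zero' (Eventually.of_forall fun k => by positivity) ?_ hlim
    filter_upwards [eventually_le_atBot (0 : ℤ)] with k hk
    have h1 : (p : ℝ) ^ (-(k : ℝ) / ((p * m : ℕ) : ℝ)) = ρ ^ k := by
      have := hpow ((p * m : ℕ) : ℝ) (-k)
      rw [Int.cast_neg, neg_neg, ← hρ] at this
      exact this
    rw [h1, norm_mul, hun, one_mul, ← zpow_natCast, Int.toNat_of_nonneg (by lia), div_zpow,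
      zpow_neg ρ, div_inv_eq_mul]
    gcongr
    exact hd k
  · intro k
    obtain ⟨hs, he⟩ := hdy k
    have hterm : ∀ j, c j * (((u⁻¹ : ℤ_[p]ˣ) : ℤ_[p]) * d (k - j)) =
        (if j = 0 then d k else 0) - y j * d (k - j) := by
      intro j
      by_cases hj : j = 0
      · subst hj
        simp only [hydef, if_true, ← hu, sub_zero, zero_mul]
        rw [← mul_assoc, Units.mul_inv, one_mul]
      · simp only [hydef, hj, if_false]; ring
    have hsum : HasSum (fun j => c j * (((u⁻¹ : ℤ_[p]ˣ) : ℤ_[p]) * d (k - j)))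
        (if k = 0 then 1 else 0) := by
      simp only [hterm]
      have := (hasSum_ite_eq (0 : ℤ) (d k)).sub hs.hasSum
      rwa [sub_eq_of_eq_add he] at this
    exact ⟨hsum.summable, hsum.tsum_eq⟩
end

section
/- Let p be a prime and m a positive integer. Let c : ℤ → ℤ_p satisfy v_p(c_0) = 0, v_p(c_k) + k/m > 0 (strictly) for every k < 0, and v_p(c_k) + k/m → +∞ as k → −∞. Then for every field L complete with respect to a nonarchimedean absolute value ‖·‖ extending the p-adic absolute value of ℚ_p (with ‖p‖ = p^{-1}) and every x ∈ L with p^{-1/m} ≤ ‖x‖ < 1, the family (c_k·x^k)_{k∈ℤ} is summable in L and ‖∑_{k∈ℤ} c_k x^k‖ = 1; in particular the sum ∑_{k∈ℤ} c_k x^k is a nonzero element of L. -/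
open Filter

/-!
For `k < 0`, the bound `p ^ (-1/m) ≤ ‖x‖` gives `‖c k * x ^ k‖ ≤ ‖c k‖ * p ^ (-k/m)`, which is
less than `1` and tends to `0` as `k → -∞`. For `k > 0`, `‖c k * x ^ k‖ ≤ ‖x‖ ^ k`, which is also
less than `1` and tends to `0` as `k → ∞`. In a complete ultrametric group, terms tending to zero
along the cofinite filter are summable. The term `k = 0` has norm `1` and strictly dominates all
others, so every finite partial sum containing it has norm `1` (`norm_sum_eq_of_dominant`), and so
does the limit (`norm_tsum_eq_of_dominant`).
-/

/-- A strictly dominant term determines the norm of a finite ultrametric sum. -/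
lemma norm_sum_eq_of_dominant {ι E : Type*} [NormedAddCommGroup E] [IsUltrametricDist E]
    {f : ι → E} {i : ι} (h : ∀ j, j ≠ i → ‖f j‖ < ‖f i‖) {s : Finset ι} (hi : i ∈ s) :
    ‖∑ j ∈ s, f j‖ = ‖f i‖ := by
  classical
  rw [← Finset.add_sum_erase s f hi]
  rcases (s.erase i).eq_empty_or_nonempty with he | hne
  · simp [he]
  · obtain ⟨j, hj, hle⟩ := IsUltrametricDist.exists_norm_finsetSum_le_of_nonempty hne f
    have hlt := hle.trans_lt (h j (Finset.ne_of_mem_erase hj))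
    rw [IsUltrametricDist.norm_add_eq_max_of_norm_ne_norm hlt.ne', max_eq_left hlt.le]

/-- Partial sums containing the dominant index have constant norm, so the sum has that norm. -/
lemma norm_tsum_eq_of_dominant {ι E : Type*} [NormedAddCommGroup E] [IsUltrametricDist E]
    {f : ι → E} {i : ι} (hf : Summable f) (h : ∀ j, j ≠ i → ‖f j‖ < ‖f i‖) :
    ‖∑' j, f j‖ = ‖f i‖ := by
  have hlim : Tendsto (fun s : Finset ι => ‖∑ j ∈ s, f j‖) atTop (nhds ‖∑' j, f j‖) :=
    Tendsto.norm hf.hasSum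
  refine tendsto_nhds_unique hlim (tendsto_const_nhds.congr' ?_)
  filter_upwards [eventually_ge_atTop {i}] with s hs
  exact (norm_sum_eq_of_dominant h (hs (Finset.mem_singleton_self i))).symm

/-- Let `c : ℤ → ℤ_[p]` satisfy `v_p(c 0) = 0` (i.e.
`‖c 0‖ = 1`), the strict growth condition `v_p(c k) + k/m > 0` for all `k < 0`
(i.e. `‖c k‖ < p^(k/m)`), and `v_p(c k) + k/m → +∞` as `k → -∞` (i.e.
`‖c k‖ * p^(-k/m) → 0`).  Then for every complete nonarchimedean field `L`
extending `ℚ_p` and every `x ∈ L` with `p^(-1/m) ≤ ‖x‖ < 1`, the family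
`(c k * x^k)_{k ∈ ℤ}` is summable in `L`, the sum has norm exactly `1`, and in
particular the sum is nonzero. -/
theorem stmt8 (p : ℕ) [Fact p.Prime] (m : ℕ) (hm : 0 < m) (c : ℤ → ℤ_[p])
    (hc0 : ‖c 0‖ = 1)
    (hneg : ∀ k : ℤ, k < 0 → ‖c k‖ < (p : ℝ) ^ ((k : ℝ) / (m : ℝ)))
    (htend : Tendsto (fun k : ℤ => ‖c k‖ * (p : ℝ) ^ (-(k : ℝ) / (m : ℝ)))
      atBot (nhds 0))
    (L : Type*) [NormedField L] [CompleteSpace L] [IsUltrametricDist L] [Algebra ℚ_[p] L]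
    (hext : ∀ q : ℚ_[p], ‖algebraMap ℚ_[p] L q‖ = ‖q‖)
    (x : L) (hx1 : (p : ℝ) ^ (-(1 : ℝ) / (m : ℝ)) ≤ ‖x‖) (hx2 : ‖x‖ < 1) :
    Summable (fun k : ℤ => algebraMap ℚ_[p] L (c k : ℚ_[p]) * x ^ k) ∧
      ‖∑' k : ℤ, algebraMap ℚ_[p] L (c k : ℚ_[p]) * x ^ k‖ = 1 ∧
      (∑' k : ℤ, algebraMap ℚ_[p] L (c k : ℚ_[p]) * x ^ k) ≠ 0 := by
  have hp : (0 : ℝ) < p := by exact_mod_cast (Fact.out : p.Prime).pos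
  have hr : (0 : ℝ) < (p : ℝ) ^ (-(1 : ℝ) / (m : ℝ)) := Real.rpow_pos_of_pos hp _
  have hx0 : 0 < ‖x‖ := hr.trans_le hx1
  have hnorm : ∀ k : ℤ, ‖algebraMap ℚ_[p] L (c k : ℚ_[p]) * x ^ k‖ = ‖c k‖ * ‖x‖ ^ k := by
    intro k
    rw [norm_mul, hext, norm_zpow, PadicInt.norm_def]
  have hnegle : ∀ k : ℤ, k < 0 → ‖c k‖ * ‖x‖ ^ k ≤ ‖c k‖ * (p : ℝ) ^ (-(k : ℝ) / (m : ℝ)) := by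
    intro k hk
    refine mul_le_mul_of_nonneg_left ?_ (norm_nonneg _)
    have e : (p : ℝ) ^ (-(k : ℝ) / (m : ℝ)) = ((p : ℝ) ^ (-(1 : ℝ) / (m : ℝ))) ^ k := by
      rw [← Real.rpow_intCast, ← Real.rpow_mul hp.le]
      congr 1
      ring
    rw [e, ← Real.rpow_intCast, ← Real.rpow_intCast]
    exact Real.rpow_le_rpow_of_nonpos hr hx1 (by exact_mod_cast hk.le)
  have hposle : ∀ k : ℤ, ‖c k‖ * ‖x‖ ^ k ≤ ‖x‖ ^ k := fun k =>
    mul_le_of_le_one_left (zpow_nonneg hx0.le k) (PadicInt.norm_le_one _)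
  have hsum : Summable (fun k : ℤ => algebraMap ℚ_[p] L (c k : ℚ_[p]) * x ^ k) := by
    apply NonarchimedeanAddGroup.summable_of_tendsto_cofinite_zero
    rw [tendsto_zero_iff_norm_tendsto_zero]
    simp only [hnorm]
    have hnn : ∀ k : ℤ, 0 ≤ ‖c k‖ * ‖x‖ ^ k := fun k => by positivity
    rw [Int.cofinite_eq]
    refine Tendsto.sup ?_ ?_
    · refine squeeze_zero' (Eventually.of_forall hnn) ?_ htend
      filter_upwards [eventually_lt_atBot 0] with k hk using hnegle k hk
    · refine squeeze_zero hnn hposle ?_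
      have ht : Tendsto (fun k : ℤ => ‖x‖ ^ k.toNat) atTop (nhds 0) :=
        (tendsto_pow_atTop_nhds_zero_of_lt_one hx0.le hx2).comp
          (tendsto_atTop.2 fun n => by
            filter_upwards [eventually_ge_atTop (n : ℤ)] with k hk
            omega)
      refine ht.congr' ?_
      filter_upwards [eventually_ge_atTop 0] with k hk
      rw [← zpow_natCast, Int.toNat_of_nonneg hk]
  have h0 : ‖algebraMap ℚ_[p] L (c 0 : ℚ_[p]) * x ^ (0 : ℤ)‖ = 1 := by
    rw [hnorm, hc0, zpow_zero, one_mul]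
  have hdom : ∀ k : ℤ, k ≠ 0 → ‖algebraMap ℚ_[p] L (c k : ℚ_[p]) * x ^ k‖ <
      ‖algebraMap ℚ_[p] L (c 0 : ℚ_[p]) * x ^ (0 : ℤ)‖ := by
    intro k hk
    rw [h0, hnorm]
    rcases lt_or_gt_of_ne hk with hk | hk
    · refine (hnegle k hk).trans_lt ?_
      rw [neg_div, Real.rpow_neg hp.le, ← div_eq_mul_inv,
        div_lt_one (Real.rpow_pos_of_pos hp _)]
      exact hneg k hk
    · exact (hposle k).trans_lt (zpow_lt_one₀ hx0 hx2 hk)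
  have h1 := (norm_tsum_eq_of_dominant hsum hdom).trans h0
  refine ⟨hsum, h1, fun h => ?_⟩
  rw [h, norm_zero] at h1
  exact zero_ne_one h1
end

section
/- Let p be a prime and m a positive integer, and let c : ℤ → ℤ_p be an m-overconvergent sequence. Then for every field L complete with respect to a nonarchimedean absolute value ‖·‖ extending the p-adic absolute value of ℚ_p (with ‖p‖ = p^{-1}) and every x ∈ L with p^{-1/(p·m)} ≤ ‖x‖ < 1, the element y = (1+x)^p − 1 satisfies p^{-1/m} ≤ ‖y‖ < 1, the family (c_k·y^k)_{k∈ℤ} is summable in L, and ‖∑_{k∈ℤ} c_k y^k‖ ≤ 1. -/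
/-!
Expanding the `p`-th power gives `y = (1+x)^p - 1 = x^p + p x u` with `‖u‖ ≤ 1`. The second term has
norm at most `‖x‖/p < 1/p ≤ p^(-1/m) ≤ ‖x‖^p`, so the ultrametric inequality yields `‖y‖ = ‖x‖^p`
(`norm_one_add_pow_sub_one`), and both bounds on `‖y‖` follow.

For the Laurent series, `‖c k y^k‖ ≤ ‖y‖^k` for `k ≥ 0` as `c k` is integral, and
`‖c k y^k‖ ≤ ‖c k‖ p^(-k/m)` for `k < 0` as `‖y‖ ≥ p^(-1/m)`. Both bounds are at most `1` and tend to
`0`, and in a complete ultrametric field a family tending to `0` along the cofinite filter is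
summable, with sum bounded by the supremum of the norms of its terms.
-/

open Filter

/-- For `‖x‖ < 1`, the top-degree term `x ^ p` dominates as soon as its norm is at least `‖p‖`. -/
lemma norm_one_add_pow_sub_one {p : ℕ} (hp : p.Prime) {L : Type*} [NormedField L]
    [IsUltrametricDist L] {x : L} (hp0 : (p : L) ≠ 0) (hx : ‖x‖ < 1)
    (hpx : ‖(p : L)‖ ≤ ‖x‖ ^ p) : ‖(1 + x) ^ p - 1‖ = ‖x‖ ^ p := by
  obtain ⟨u, hu, hy⟩ : ∃ u : L, ‖u‖ ≤ 1 ∧ (1 + x) ^ p - 1 = x ^ p + p * x * u := by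
    have h := add_pow_prime_eq hp 1 x
    simp only [one_pow, one_mul, mul_one] at h
    refine ⟨_, ?_, by rw [h, add_assoc, add_sub_cancel_left]⟩
    refine IsUltrametricDist.norm_sum_le_of_forall_le_of_nonneg zero_le_one fun k _ => ?_
    rw [norm_mul, norm_pow]
    exact mul_le_one₀ (pow_le_one₀ (norm_nonneg x) hx.le) (norm_nonneg _)
      (IsUltrametricDist.norm_natCast_le_one L _)
  have hlt : ‖(p : L) * x * u‖ < ‖x ^ p‖ := by
    rw [norm_mul, norm_mul, norm_pow]
    have h0 : 0 < ‖(p : L)‖ := norm_pos_iff.mpr hp0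
    calc ‖(p : L)‖ * ‖x‖ * ‖u‖ ≤ ‖(p : L)‖ * ‖x‖ := mul_le_of_le_one_right (by positivity) hu
      _ < ‖(p : L)‖ := mul_lt_of_lt_one_right h0 hx
      _ ≤ ‖x‖ ^ p := hpx
  rw [hy, IsUltrametricDist.norm_add_eq_max_of_norm_ne_norm hlt.ne', max_eq_left hlt.le, norm_pow]

/-- Let `c` be `m`-overconvergent.  For every complete
nonarchimedean field `L` extending `ℚ_p` and every `x ∈ L` with
`p^(-1/(p*m)) ≤ ‖x‖ < 1`, the element `y = (1+x)^p - 1` satisfies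
`p^(-1/m) ≤ ‖y‖ < 1`, the family `(c k * y^k)_{k ∈ ℤ}` is summable in `L`, and
the sum has norm at most `1`.  (This is the functional form of the statement
that Frobenius maps overconvergent series of level `N` to level `N+1`.) -/
theorem stmt11 (p : ℕ) [Fact p.Prime] (m : ℕ) (hm : 0 < m) (c : ℤ → ℤ_[p])
    (hc : IsOverconvergent p m c)
    (L : Type*) [NormedField L] [CompleteSpace L] [IsUltrametricDist L] [Algebra ℚ_[p] L]
    (hext : ∀ q : ℚ_[p], ‖algebraMap ℚ_[p] L q‖ = ‖q‖)
    (x : L) (hx1 : (p : ℝ) ^ (-(1 : ℝ) / ((p : ℝ) * (m : ℝ))) ≤ ‖x‖) (hx2 : ‖x‖ < 1) :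
    ((p : ℝ) ^ (-(1 : ℝ) / (m : ℝ)) ≤ ‖(1 + x) ^ p - 1‖ ∧ ‖(1 + x) ^ p - 1‖ < 1) ∧
      Summable (fun k : ℤ => algebraMap ℚ_[p] L (c k : ℚ_[p]) * ((1 + x) ^ p - 1) ^ k) ∧
      ‖∑' k : ℤ, algebraMap ℚ_[p] L (c k : ℚ_[p]) * ((1 + x) ^ p - 1) ^ k‖ ≤ 1 := by
  have hp : p.Prime := Fact.out
  have hp1 : (1 : ℝ) < p := by exact_mod_cast hp.one_lt
  have hp0 : (0 : ℝ) < p := by linarith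
  have hm1 : (1 : ℝ) ≤ m := by exact_mod_cast hm
  have hm0 : (0 : ℝ) < m := by linarith
  have hnp : ‖(p : L)‖ = (p : ℝ)⁻¹ := by
    rw [← map_natCast (algebraMap ℚ_[p] L) p, hext, Padic.norm_p]
  have hpL : (p : L) ≠ 0 := norm_pos_iff.mp (by rw [hnp]; positivity)
  have hxp : (p : ℝ) ^ (-(1 : ℝ) / (m : ℝ)) ≤ ‖x‖ ^ p := by
    refine le_trans (le_of_eq ?_) (pow_le_pow_left₀ (by positivity) hx1 p)
    rw [← Real.rpow_mul_natCast hp0.le]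
    congr 1
    field_simp
  have hpx : ‖(p : L)‖ ≤ ‖x‖ ^ p := by
    refine le_trans ?_ hxp
    rw [hnp, ← Real.rpow_neg_one]
    refine Real.rpow_le_rpow_of_exponent_le hp1.le ?_
    rw [le_div_iff₀ hm0]
    linarith
  have hy := norm_one_add_pow_sub_one hp hpL hx2 hpx
  have hy1 : (p : ℝ) ^ (-(1 : ℝ) / (m : ℝ)) ≤ ‖(1 + x) ^ p - 1‖ := hy ▸ hxp
  have hy2 : ‖(1 + x) ^ p - 1‖ < 1 := by
    rw [hy]
    exact pow_lt_one₀ (norm_nonneg x) hx2 hp.ne_zero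
  generalize (1 + x) ^ p - 1 = y at hy1 hy2
  have hnorm (k : ℤ) : ‖algebraMap ℚ_[p] L (c k : ℚ_[p]) * y ^ k‖ = ‖c k‖ * ‖y‖ ^ k := by
    rw [norm_mul, hext, norm_zpow, PadicInt.norm_def]
  have hneg (k : ℤ) (hk : k < 0) : ‖c k‖ * ‖y‖ ^ k ≤ ‖c k‖ * (p : ℝ) ^ (-(k : ℝ) / (m : ℝ)) := by
    refine mul_le_mul_of_nonneg_left ?_ (norm_nonneg _)
    have : (p : ℝ) ^ (-(k : ℝ) / (m : ℝ)) = ((p : ℝ) ^ (-(1 : ℝ) / (m : ℝ))) ^ k := by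
      rw [← Real.rpow_mul_intCast hp0.le]
      congr 1
      ring
    rw [this]
    obtain ⟨n, rfl⟩ := Int.exists_eq_neg_ofNat hk.le
    simp only [zpow_neg, zpow_natCast]
    exact inv_anti₀ (by positivity) (pow_le_pow_left₀ (by positivity) hy1 n)
  have hpos (k : ℤ) (hk : 0 ≤ k) : ‖c k‖ * ‖y‖ ^ k ≤ ‖y‖ ^ k.toNat := by
    obtain ⟨n, rfl⟩ := Int.eq_ofNat_of_zero_le hk
    simpa using mul_le_of_le_one_left (pow_nonneg (norm_nonneg y) n) (PadicInt.norm_le_one (c n))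
  have hle (k : ℤ) : ‖algebraMap ℚ_[p] L (c k : ℚ_[p]) * y ^ k‖ ≤ 1 := by
    rw [hnorm]
    rcases lt_or_ge k 0 with hk | hk
    · refine (hneg k hk).trans ?_
      calc ‖c k‖ * (p : ℝ) ^ (-(k : ℝ) / (m : ℝ))
          ≤ (p : ℝ) ^ ((k : ℝ) / (m : ℝ)) * (p : ℝ) ^ (-(k : ℝ) / (m : ℝ)) :=
            mul_le_mul_of_nonneg_right (hc.1 k hk) (by positivity)
        _ = 1 := by rw [← Real.rpow_add hp0, neg_div, add_neg_cancel, Real.rpow_zero]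
    · exact (hpos k hk).trans (pow_le_one₀ (norm_nonneg y) hy2.le)
  refine ⟨⟨hy1, hy2⟩, NonarchimedeanAddGroup.summable_of_tendsto_cofinite_zero ?_,
    IsUltrametricDist.norm_tsum_le_of_forall_le_of_nonneg zero_le_one hle⟩
  rw [tendsto_zero_iff_norm_tendsto_zero, Int.cofinite_eq]
  simp only [hnorm]
  have h0 (k : ℤ) : 0 ≤ ‖c k‖ * ‖y‖ ^ k := by positivity
  refine tendsto_sup.mpr ⟨?_, ?_⟩
  · refine squeeze_zero' (Eventually.of_forall h0) ?_ hc.2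
    filter_upwards [eventually_lt_atBot 0] with k hk using hneg k hk
  · have htoNat : Tendsto Int.toNat atTop atTop :=
      tendsto_atTop_atTop.mpr fun n => ⟨n, fun k hk => by omega⟩
    refine squeeze_zero' (Eventually.of_forall h0) ?_
      ((tendsto_pow_atTop_nhds_zero_of_lt_one (norm_nonneg y) hy2).comp htoNat)
    filter_upwards [eventually_ge_atTop 0] with k hk using hpos k hk
end
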